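/- arXiv:1910.04552 — 5 statements merged into one kernel-verified Lean document; each statement's English description precedes it below -/
import Mathlib

section
/- For every integer n ≥ 4, the number of connected induced subgraphs of the tree T¹(n,p) is strictly increasing in p: for all p with 2 ≤ p and p + 1 ≤ n − 2, N(T¹(n, p+1)) > N(T¹(n, p)). -/
/-!
Passing from `T¹(n, p)` to `T¹(n, p + 1)` amounts to a shift along one edge of the path. Let `u` be
an endpoint of the path, `v` its neighbour on the path and `A` the set of leaves attached to `u`.
Detaching `A` from `u` and attaching it to `v` turns `u` into a further leaf at `v`, and, up to
relabelling the vertices, gives `T¹(n, p + 1)`; here `u` has to be the left endpoint if `p` is odd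
and the right endpoint if `p` is even.

The shift strictly increases the number of connected sets. A set connected before the shift stays
connected, unless it contains `u` and a vertex of `A` but not `v`. Such a set lies in `A ∪ {u}`, and
replacing `u` by `v` makes it connected after the shift. The new set was not connected before the
shift, since it meets `A` and contains `v` but not `u`; hence this map on connected sets is
injective (`numCIS_lt_of_shift`). It is not surjective: it misses `{w, v, x}`, where `w ∈ A` and
`x` is the other neighbour of `v` on the path.

Connectedness of induced subgraphs is handled throughout by the criterion `induce_connected_iff`,
and only the inclusion of the shifted tree into `T¹(n, p + 1)` is needed, along an injective
relabelling (`numCIS_comap_le`).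
-/

/-- The number of connected induced subgraphs of `G`: the number of nonempty vertex subsets
inducing a connected subgraph. -/
noncomputable def numCIS {V : Type*} (G : SimpleGraph V) : ℕ :=
  Nat.card {S : Set V | S.Nonempty ∧ (G.induce S).Connected}

/-- The tree `T¹(n, p)`: a path `0 - 1 - ⋯ - (n-p-1)` on `n - p` vertices, with
`⌊p/2⌋` leaves (the vertices `n-p, …, n-p+⌊p/2⌋-1`) attached to the endpoint `0` and
`⌈p/2⌉` leaves (the vertices `n-p+⌊p/2⌋, …, n-1`) attached to the endpoint `n-p-1`;
equivalently, the tree obtained from the disjoint stars `S_{1+⌊p/2⌋}` and `S_{1+⌈p/2⌉}` by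
identifying their central vertices with the two leaves of `P_{n-p}`. -/
def T1 (n p : ℕ) : SimpleGraph (Fin n) :=
  SimpleGraph.fromRel (fun a b =>
    (b.val = a.val + 1 ∧ b.val ≤ n - p - 1) ∨
    (a.val = 0 ∧ n - p ≤ b.val ∧ b.val < n - p + p / 2) ∨
    (a.val = n - p - 1 ∧ n - p + p / 2 ≤ b.val))

/-! ### Connected induced subgraphs -/

/-- `S` induces a connected subgraph iff it is nonempty and every predicate that propagates along
the edges inside `S` is constant on `S`. -/
lemma induce_connected_iff {V : Type*} (G : SimpleGraph V) (S : Set V) :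
    (G.induce S).Connected ↔ S.Nonempty ∧ ∀ P : V → Prop,
      (∀ a ∈ S, ∀ b ∈ S, G.Adj a b → P a → P b) → ∀ a ∈ S, ∀ b ∈ S, P a → P b := by
  constructor
  · intro h
    refine ⟨Set.nonempty_coe_sort.mp h.nonempty, fun P hP a ha b hb hPa => ?_⟩
    obtain ⟨w⟩ := h.preconnected ⟨a, ha⟩ ⟨b, hb⟩
    have key : ∀ (x y : S), (G.induce S).Walk x y → P x → P y := by
      intro x y w
      induction w with
      | nil => exact id
      | cons hadj _ ih => exact fun hx => ih (hP _ (Subtype.prop _) _ (Subtype.prop _) hadj hx)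
    exact key _ _ w hPa
  · rintro ⟨⟨s, hs⟩, h⟩
    have : Nonempty S := ⟨⟨s, hs⟩⟩
    refine ⟨fun x y => ?_⟩
    have := h (fun z => ∃ hz : z ∈ S, (G.induce S).Reachable x ⟨z, hz⟩) (by
      rintro a ha b hb hab ⟨_, hr⟩
      refine ⟨hb, hr.trans (SimpleGraph.Adj.reachable ?_)⟩
      exact hab) x x.2 y y.2 ⟨x.2, SimpleGraph.Reachable.refl _⟩
    exact this.2

lemma numCIS_comap_le {V W : Type*} [Finite W] (H : SimpleGraph W) (f : V → W)
    (hf : Function.Injective f) : numCIS (H.comap f) ≤ numCIS H := by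
  unfold numCIS
  refine Nat.card_le_card_of_injective
    (fun S : {S : Set V | S.Nonempty ∧ ((H.comap f).induce S).Connected} =>
      (⟨f '' S.1, S.2.1.image f, ?_⟩ :
        {S : Set W | S.Nonempty ∧ (H.induce S).Connected})) ?_
  · obtain ⟨S, hne, hS⟩ := S
    rw [induce_connected_iff] at hS ⊢
    refine ⟨hne.image f, ?_⟩
    rintro P hP _ ⟨a, ha, rfl⟩ _ ⟨b, hb, rfl⟩ hPa
    exact hS.2 (P ∘ f) (fun a ha b hb hab =>
      hP _ (Set.mem_image_of_mem f ha) _ (Set.mem_image_of_mem f hb) hab) a ha b hb hPa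
  · rintro ⟨S, _⟩ ⟨T, _⟩ h
    exact Subtype.ext (hf.image_injective (congrArg Subtype.val h))

/-! ### Shifting along an edge -/

/-- The shift along `uv`: if `A` is joined to the rest of `G` only through `u`, `u` has no
neighbour outside `A ∪ {v}`, and `H` contains the edge `uv` as well as
the graph obtained from `G` by re-attaching the neighbours of `u` other than `v` to `v`, then `H`
has more connected sets than `G`. The edges `vw` and `vx` of `H` make the inequality strict. -/
lemma numCIS_lt_of_shift {V : Type*} [Finite V] (G H : SimpleGraph V) (A : Set V) (u v w x : V)
    (huv : u ≠ v) (huA : u ∉ A) (hvA : v ∉ A) (hw : w ∈ A) (hxA : x ∉ A) (hxu : x ≠ u)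
    (hxv : x ≠ v) (hA : ∀ a ∈ A, ∀ b, G.Adj a b → b ∈ A ∨ b = u)
    (hu : ∀ b, G.Adj u b → b ∈ A ∨ b = v)
    (hGH : ∀ a b, a ≠ u → b ≠ u → G.Adj a b → H.Adj a b)
    (hHu : H.Adj u v) (hH : ∀ b, G.Adj u b → b ≠ v → H.Adj v b)
    (hvw : H.Adj v w) (hvx : H.Adj v x) : numCIS G < numCIS H := by
  classical
  -- A connected set of `G` that avoids `u` lies in `A` or in the complement of `A`.
  have sepA : ∀ S : Set V, (G.induce S).Connected → u ∉ S →
      ∀ a ∈ S, a ∈ A → ∀ b ∈ S, b ∈ A := by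
    intro S hS huS a ha haA b hb
    rw [induce_connected_iff] at hS
    refine hS.2 (· ∈ A) (fun c hc d hd hcd hcA => ?_) a ha b hb haA
    rcases hA c hcA d hcd with h | rfl
    · exact h
    · exact absurd hd huS
  -- A connected set of `G` that contains `u` but not `v` lies in `A ∪ {u}`.
  have sepV : ∀ S : Set V, (G.induce S).Connected → u ∈ S → v ∉ S →
      ∀ b ∈ S, b ∈ A ∨ b = u := by
    intro S hS huS hvS b hb
    rw [induce_connected_iff] at hS
    refine hS.2 (fun z => z ∈ A ∨ z = u) (fun c hc d hd hcd hcA => ?_) u huS b hb (Or.inr rfl)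
    rcases hcA with h | rfl
    · exact hA c h d hcd
    · rcases hu d hcd with h | rfl
      · exact Or.inl h
      · exact absurd hd hvS
  have bad : ∀ S : Set V, (G.induce S).Connected → ¬ (H.induce S).Connected →
      u ∈ S ∧ v ∉ S := by
    intro S hS hHS
    rw [induce_connected_iff] at hS hHS
    by_contra hcon
    refine hHS ⟨hS.1, fun P hP => hS.2 P fun a ha b hb hab hPa => ?_⟩
    by_cases hau : a = u
    · subst hau
      have hv : v ∈ S := by tauto
      by_cases hbv : b = v
      · subst hbv; exact hP _ ha _ hb hHu hPa
      · exact hP _ hv _ hb (hH b hab hbv) (hP _ ha _ hv hHu hPa)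
    · by_cases hbu : b = u
      · subst hbu
        have hv : v ∈ S := by tauto
        by_cases hav : a = v
        · subst hav; exact hP _ ha _ hb hHu.symm hPa
        · exact hP _ hv _ hb hHu.symm (hP _ ha _ hv (hH a hab.symm hav).symm hPa)
      · exact hP _ ha _ hb (hGH a b hau hbu hab) hPa
  have badA : ∀ S : Set V, (G.induce S).Connected → ¬ (H.induce S).Connected →
      ∃ a ∈ S, a ∈ A := by
    intro S hS hHS
    obtain ⟨huS, hvS⟩ := bad S hS hHS
    by_contra hcon
    push Not at hcon
    have hSu : ∀ b ∈ S, b = u := fun b hb =>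
      (sepV S hS huS hvS b hb).resolve_left (hcon b hb)
    refine hHS ((induce_connected_iff H S).2 ⟨⟨u, huS⟩, fun P _ a ha b hb hPa => ?_⟩)
    rwa [hSu b hb, ← hSu a ha]
  have good : ∀ S : Set V, (G.induce S).Connected → u ∈ S → v ∉ S →
      (H.induce (insert v (S \ {u}))).Connected := by
    intro S hS huS hvS
    rw [induce_connected_iff] at hS ⊢
    refine ⟨⟨v, Set.mem_insert _ _⟩, fun P hP => ?_⟩
    -- `P` is pulled back along the map that sends `u` to `v` and fixes all other vertices.
    have key := hS.2 (fun z => P (if z = u then v else z)) (by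
      intro a ha b hb hab hPa
      have hav : a ≠ v := fun h => hvS (h ▸ ha)
      have hbv : b ≠ v := fun h => hvS (h ▸ hb)
      by_cases hau : a = u
      · have hbu : b ≠ u := fun h => hab.ne (hau.trans h.symm)
        simp only [hau, hbu, if_true, if_false] at hPa ⊢
        exact hP v (by simp) b (by simp [hb, hbu]) (hH b (hau ▸ hab) hbv) hPa
      · by_cases hbu : b = u
        · simp only [hau, hbu, if_true, if_false] at hPa ⊢
          exact hP a (by simp [ha, hau]) v (by simp) (hH a (hbu ▸ hab.symm) hav).symm hPa
        · simp only [hau, hbu, if_false] at hPa ⊢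
          exact hP a (by simp [ha, hau]) b (by simp [hb, hbu]) (hGH a b hau hbu hab) hPa)
    have lift : ∀ c ∈ insert v (S \ {u}), ∃ d ∈ S, (if d = u then v else d) = c := by
      rintro c (rfl | ⟨hc, hcu⟩)
      · exact ⟨u, huS, by simp⟩
      · exact ⟨c, hc, by simp at hcu; simp [hcu]⟩
    intro a ha b hb hPa
    obtain ⟨a', ha', rfl⟩ := lift a ha
    obtain ⟨b', hb', rfl⟩ := lift b hb
    exact key a' ha' b' hb' hPa
  let φ : Set V → Set V := fun S => if (H.induce S).Connected then S else insert v (S \ {u})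
  have hφ : ∀ S : Set V, (G.induce S).Connected → (H.induce (φ S)).Connected := by
    intro S hS
    by_cases h : (H.induce S).Connected
    · rwa [show φ S = S from if_pos h]
    · rw [show φ S = insert v (S \ {u}) from if_neg h]
      exact good S hS (bad S hS h).1 (bad S hS h).2
  have hnot : ∀ S : Set V, (G.induce S).Connected → ¬ (H.induce S).Connected →
      ¬ (G.induce (insert v (S \ {u}))).Connected := by
    intro S hS h hc
    obtain ⟨a, ha, haA⟩ := badA S hS h
    refine hvA (sepA _ hc (by simp [huv]) a (Or.inr ⟨ha, ?_⟩) haA v (by simp))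
    rintro rfl
    exact huA haA
  have hinj : ∀ S T : Set V, (G.induce S).Connected → (G.induce T).Connected →
      φ S = φ T → S = T := by
    intro S T hS hT hST
    by_cases h : (H.induce S).Connected <;> by_cases h' : (H.induce T).Connected <;>
      simp only [φ, h, h', if_true, if_false] at hST
    · exact hST
    · exact absurd (hST ▸ hS) (hnot T hT h')
    · exact absurd (hST ▸ hT) (hnot S hS h)
    · obtain ⟨h1, h2⟩ := bad S hS h
      obtain ⟨h3, h4⟩ := bad T hT h'
      ext z
      have hz : z ∈ insert v (S \ {u}) ↔ z ∈ insert v (T \ {u}) := by rw [hST]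
      simp only [Set.mem_insert_iff, Set.mem_sdiff, Set.mem_singleton_iff] at hz
      by_cases hzu : z = u
      · subst hzu; tauto
      · by_cases hzv : z = v
        · subst hzv; tauto
        · tauto
  let F : {S : Set V | S.Nonempty ∧ (G.induce S).Connected} →
      {S : Set V | S.Nonempty ∧ (H.induce S).Connected} :=
    fun S => ⟨φ S.1, Set.nonempty_coe_sort.mp (hφ S.1 S.2.2).nonempty, hφ S.1 S.2.2⟩
  have hF : Function.Injective F := by
    rintro ⟨S, hS⟩ ⟨T, hT⟩ h
    exact Subtype.ext (hinj S T hS.2 hT.2 (congrArg Subtype.val h))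
  have hX : (H.induce ({w, v, x} : Set V)).Connected := by
    rw [induce_connected_iff]
    refine ⟨⟨w, by simp⟩, fun P hP => ?_⟩
    have h1 := hP v (by simp) w (by simp) hvw
    have h2 := hP w (by simp) v (by simp) hvw.symm
    have h3 := hP v (by simp) x (by simp) hvx
    have h4 := hP x (by simp) v (by simp) hvx.symm
    rintro a (rfl | rfl | rfl) b (rfl | rfl | rfl) <;> tauto
  have hns : ¬ Function.Surjective F := by
    intro hs
    obtain ⟨⟨S, hS⟩, hSX⟩ := hs ⟨{w, v, x}, ⟨w, by simp⟩, hX⟩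
    have hSX : φ S = {w, v, x} := congrArg Subtype.val hSX
    by_cases h : (H.induce S).Connected
    · simp only [φ, h, if_true] at hSX
      subst hSX
      refine hvA (sepA _ hS.2 ?_ w (by simp) hw v (by simp))
      rintro (rfl | rfl | rfl)
      · exact huA hw
      · exact huv rfl
      · exact hxu rfl
    · simp only [φ, h, if_false] at hSX
      obtain ⟨h1, h2⟩ := bad S hS.2 h
      have hx : x ∈ insert v (S \ {u}) := by rw [hSX]; simp
      rcases hx with rfl | ⟨hx, _⟩
      · exact hxv rfl
      · rcases sepV S hS.2 h1 h2 x hx with h | h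
        · exact hxA h
        · exact hxu h
  unfold numCIS
  refine lt_of_le_of_ne (Nat.card_le_card_of_injective F hF) fun heq => hns ?_
  exact ((Nat.bijective_iff_injective_and_card F).2 ⟨hF, heq⟩).2

/-! ### The trees `T¹(n, p)` -/

lemma T1_adj {n p : ℕ} (a b : Fin n) : (T1 n p).Adj a b ↔ a.val ≠ b.val ∧
    (((b.val = a.val + 1 ∧ b.val ≤ n - p - 1) ∨
    (a.val = 0 ∧ n - p ≤ b.val ∧ b.val < n - p + p / 2) ∨
    (a.val = n - p - 1 ∧ n - p + p / 2 ≤ b.val)) ∨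
    ((a.val = b.val + 1 ∧ a.val ≤ n - p - 1) ∨
    (b.val = 0 ∧ n - p ≤ a.val ∧ a.val < n - p + p / 2) ∨
    (b.val = n - p - 1 ∧ n - p + p / 2 ≤ a.val))) := by
  rw [T1, SimpleGraph.fromRel_adj, ne_eq, Fin.ext_iff]

/-- The number of connected induced subgraphs of `T¹(n, p)` is strictly increasing in `p`. -/
theorem stmt_13 (n p : ℕ) (hn : 4 ≤ n) (hp : 2 ≤ p) (hp2 : p + 1 ≤ n - 2) :
    numCIS (T1 n p) < numCIS (T1 n (p + 1)) := by
  obtain ⟨a, ha⟩ | ⟨a, ha⟩ := Nat.even_or_odd p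
  · -- The right leaves move from `n - p - 1` to `n - p - 2`, and `n - p - 1` becomes the first
    -- right leaf; the left leaves shift down by one.
    obtain ⟨k, rfl⟩ : ∃ k, n = k + (a + a) := ⟨n - (a + a), by omega⟩
    subst ha
    have e1 : k + (a + a) - (a + a) = k := by omega
    have e2 : k + (a + a) - (a + a + 1) = k - 1 := by omega
    have e3 : (a + a) / 2 = a := by omega
    have e4 : (a + a + 1) / 2 = a := by omega
    let f : Fin (k + (a + a)) → Fin (k + (a + a)) := fun x =>
      ⟨if x.val < k - 1 then x.val else if x.val = k - 1 then k - 1 + a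
        else if x.val < k + a then x.val - 1 else x.val, by split_ifs <;> omega⟩
    have hfv : ∀ x, (f x).val = if x.val < k - 1 then x.val else if x.val = k - 1 then k - 1 + a
        else if x.val < k + a then x.val - 1 else x.val := fun _ => rfl
    have hf : Function.Injective f := by
      intro x y hxy
      have := congrArg Fin.val hxy
      rw [hfv, hfv] at this
      apply Fin.ext
      split_ifs at this <;> omega
    refine lt_of_lt_of_le ?_ (numCIS_comap_le (T1 _ (a + a + 1)) f hf)
    apply numCIS_lt_of_shift (T1 (k + (a + a)) (a + a)) _ {z | k + a ≤ z.val}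
      ⟨k - 1, by omega⟩ ⟨k - 2, by omega⟩ ⟨k + a, by omega⟩ ⟨k - 3, by omega⟩ <;>
    simp only [SimpleGraph.comap_adj, T1_adj, e1, e2, e3, e4, Set.mem_ofPred_eq, ne_eq,
      Fin.ext_iff, hfv]
    case hGH =>
      -- An edge avoiding `u` is carried to an edge of the same kind.
      rintro x y hxu hyu ⟨hne, (h | h | h) | (h | h | h)⟩
      · exact ⟨by split_ifs <;> omega, Or.inl (Or.inl (by split_ifs <;> omega))⟩
      · exact ⟨by split_ifs <;> omega, Or.inl (Or.inr (Or.inl (by split_ifs <;> omega)))⟩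
      · exact ⟨by split_ifs <;> omega, Or.inl (Or.inr (Or.inr (by split_ifs <;> omega)))⟩
      · exact ⟨by split_ifs <;> omega, Or.inr (Or.inl (by split_ifs <;> omega))⟩
      · exact ⟨by split_ifs <;> omega, Or.inr (Or.inr (Or.inl (by split_ifs <;> omega)))⟩
      · exact ⟨by split_ifs <;> omega, Or.inr (Or.inr (Or.inr (by split_ifs <;> omega)))⟩
    case hH =>
      rintro b ⟨hne, h⟩ hbv
      have hb : k + a ≤ b.val := by omega
      exact ⟨by split_ifs <;> omega, Or.inl (Or.inr (Or.inr (by split_ifs <;> omega)))⟩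
    case hHu => exact ⟨by split_ifs <;> omega, Or.inr (Or.inr (Or.inr (by split_ifs <;> omega)))⟩
    case hvw => exact ⟨by split_ifs <;> omega, Or.inl (Or.inr (Or.inr (by split_ifs <;> omega)))⟩
    case hvx => exact ⟨by split_ifs <;> omega, Or.inr (Or.inl (by split_ifs <;> omega))⟩
    all_goals intros
    all_goals omega
  · -- The left leaves move from `0` to `1`, and `0` becomes the first left leaf; the remaining
    -- path vertices shift down by one.
    obtain ⟨k, rfl⟩ : ∃ k, n = k + (2 * a + 1) := ⟨n - (2 * a + 1), by omega⟩
    subst ha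
    have e1 : k + (2 * a + 1) - (2 * a + 1) = k := by omega
    have e2 : k + (2 * a + 1) - (2 * a + 1 + 1) = k - 1 := by omega
    have e3 : (2 * a + 1) / 2 = a := by omega
    have e4 : (2 * a + 1 + 1) / 2 = a + 1 := by omega
    let f : Fin (k + (2 * a + 1)) → Fin (k + (2 * a + 1)) := fun x =>
      ⟨if x.val = 0 then k - 1 else if x.val < k then x.val - 1 else x.val,
        by split_ifs <;> omega⟩
    have hfv : ∀ x, (f x).val =
        if x.val = 0 then k - 1 else if x.val < k then x.val - 1 else x.val := fun _ => rfl
    have hf : Function.Injective f := by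
      intro x y hxy
      have := congrArg Fin.val hxy
      rw [hfv, hfv] at this
      apply Fin.ext
      split_ifs at this <;> omega
    refine lt_of_lt_of_le ?_ (numCIS_comap_le (T1 _ (2 * a + 1 + 1)) f hf)
    apply numCIS_lt_of_shift (T1 (k + (2 * a + 1)) (2 * a + 1)) _
      {z | k ≤ z.val ∧ z.val < k + a}
      ⟨0, by omega⟩ ⟨1, by omega⟩ ⟨k, by omega⟩ ⟨2, by omega⟩ <;>
    simp only [SimpleGraph.comap_adj, T1_adj, e1, e2, e3, e4, Set.mem_ofPred_eq, ne_eq,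
      Fin.ext_iff, hfv, ↓reduceIte, one_ne_zero,
      two_ne_zero, lt_self_iff_false, not_false_eq_true]
    case hGH =>
      -- An edge avoiding `u` is carried to an edge of the same kind.
      rintro x y hxu hyu ⟨hne, (h | h | h) | (h | h | h)⟩
      · exact ⟨by split_ifs <;> omega, Or.inl (Or.inl (by split_ifs <;> omega))⟩
      · exact ⟨by split_ifs <;> omega, Or.inl (Or.inr (Or.inl (by split_ifs <;> omega)))⟩
      · exact ⟨by split_ifs <;> omega, Or.inl (Or.inr (Or.inr (by split_ifs <;> omega)))⟩
      · exact ⟨by split_ifs <;> omega, Or.inr (Or.inl (by split_ifs <;> omega))⟩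
      · exact ⟨by split_ifs <;> omega, Or.inr (Or.inr (Or.inl (by split_ifs <;> omega)))⟩
      · exact ⟨by split_ifs <;> omega, Or.inr (Or.inr (Or.inr (by split_ifs <;> omega)))⟩
    case hH =>
      rintro b ⟨hne, h⟩ hbv
      have hb : k ≤ b.val ∧ b.val < k + a := by omega
      exact ⟨by split_ifs <;> omega, Or.inl (Or.inr (Or.inl (by split_ifs <;> omega)))⟩
    case hHu => exact ⟨by split_ifs <;> omega, Or.inr (Or.inr (Or.inl (by split_ifs <;> omega)))⟩
    case hvw => exact ⟨by split_ifs <;> omega, Or.inl (Or.inr (Or.inl (by split_ifs <;> omega)))⟩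
    case hvx => exact ⟨by intro h; split_ifs at h <;> omega, Or.inl (Or.inl (by split_ifs <;> omega))⟩
    all_goals intros
    all_goals omega
end

section
/- Let l, r ≥ 3 and n ≥ l + r be integers and let D_n(l; r) be the double tadpole graph of order n. Then N(D_n(3; 3)) = (n−1)(n+6)/2. Furthermore, if (l, r) ≠ (3, 3), then N(D_n(l; r)) > N(D_n(3; 3)). -/
/-- The double tadpole graph `D_n(l; r)` of order `n` (for `l, r ≥ 3` and `n ≥ l + r`):
a cycle `C_l` on the vertices `0, …, l-1`, a cycle `C_r` on the vertices `n-r, …, n-1`, and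
a path `l-1, l, …, n-r` joining them (obtained from `C_l`, `C_r` and `P_{n+2-l-r}` by
identifying the two leaves of the path with one vertex of each cycle). -/
def doubleTadpole (n l r : ℕ) : SimpleGraph (Fin n) :=
  SimpleGraph.fromRel (fun a b =>
    (a.val < l ∧ b.val = (a.val + 1) % l) ∨
    (l - 1 ≤ a.val ∧ a.val < n - r ∧ b.val = a.val + 1) ∨
    (n - r ≤ a.val ∧ b.val = n - r + (a.val + 1 - (n - r)) % r))

/-- For `n ≥ l + r`, the double tadpole graph is a path with two chords. -/
lemma doubleTadpole_adj {n l r : ℕ} (hl : 3 ≤ l) (hr : 3 ≤ r) (hn : l + r ≤ n) (x y : Fin n) :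
    (doubleTadpole n l r).Adj x y ↔
      (x.val + 1 = y.val ∨ y.val + 1 = x.val ∨
        (x.val = 0 ∧ y.val = l - 1) ∨ (y.val = 0 ∧ x.val = l - 1) ∨
        (x.val = n - r ∧ y.val = n - 1) ∨ (y.val = n - r ∧ x.val = n - 1)) := by
  have key : ∀ a b : Fin n,
      ((a.val < l ∧ b.val = (a.val + 1) % l) ∨
      (l - 1 ≤ a.val ∧ a.val < n - r ∧ b.val = a.val + 1) ∨
      (n - r ≤ a.val ∧ b.val = n - r + (a.val + 1 - (n - r)) % r)) ↔
      (a.val + 1 = b.val ∨ (a.val = l - 1 ∧ b.val = 0) ∨ (a.val = n - 1 ∧ b.val = n - r)) := by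
    intro a b
    have ha := a.isLt
    have hb := b.isLt
    have h1 : a.val < l → (a.val + 1) % l = if a.val = l - 1 then 0 else a.val + 1 := by
      intro h
      split_ifs with h2
      · rw [show a.val + 1 = l by omega, Nat.mod_self]
      · exact Nat.mod_eq_of_lt (by omega)
    have h2 : n - r ≤ a.val → (a.val + 1 - (n - r)) % r =
        if a.val = n - 1 then 0 else a.val + 1 - (n - r) := by
      intro h
      split_ifs with h2
      · rw [show a.val + 1 - (n - r) = r by omega, Nat.mod_self]
      · exact Nat.mod_eq_of_lt (by omega)
    by_cases c1 : a.val < l <;> by_cases c2 : n - r ≤ a.val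
    · omega
    · rw [h1 c1]; split_ifs <;> omega
    · rw [h2 c2]; split_ifs <;> omega
    · omega
  have hx := x.isLt
  have hy := y.isLt
  rw [doubleTadpole, SimpleGraph.fromRel_adj, key x y, key y x, ne_eq, Fin.ext_iff]
  omega

/-- The vertex set `[a, b]`, with `0` added if `ε` and `n - 1` added if `δ`, where
`p = (ε, δ, a, b)`. -/
def vset (n : ℕ) (p : Bool × Bool × ℕ × ℕ) : Set (Fin n) :=
  {x | (p.2.2.1 ≤ x.val ∧ x.val ≤ p.2.2.2) ∨ (p.1 = true ∧ x.val = 0) ∨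
    (p.2.1 = true ∧ x.val = n - 1)}

/-- The codes of the intervals `[a, b]` in `{0, …, n-1}`. -/
def idxPlain (n : ℕ) : Finset (Bool × Bool × ℕ × ℕ) :=
  {false} ×ˢ {false} ×ˢ ((Finset.range n ×ˢ Finset.range n).filter fun q => q.1 ≤ q.2)

/-- The codes of the sets `{0} ∪ [a, b]` with `2 ≤ a ≤ l - 1 ≤ b ≤ n - 1`. -/
def idxLeft (n l : ℕ) : Finset (Bool × Bool × ℕ × ℕ) :=
  {true} ×ˢ {false} ×ˢ (Finset.Icc 2 (l - 1) ×ˢ Finset.Icc (l - 1) (n - 1))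

/-- The codes of the sets `[a, b] ∪ {n - 1}` with `a ≤ n - r ≤ b ≤ n - 3`. -/
def idxRight (n r : ℕ) : Finset (Bool × Bool × ℕ × ℕ) :=
  {false} ×ˢ {true} ×ˢ (Finset.Icc 0 (n - r) ×ˢ Finset.Icc (n - r) (n - 3))

/-- The codes of all the sets that are counted: the three families above, and
`{0} ∪ [2, n - 3] ∪ {n - 1}`. -/
def idx (n l r : ℕ) : Finset (Bool × Bool × ℕ × ℕ) :=
  ((idxPlain n ∪ idxLeft n l) ∪ idxRight n r) ∪ {(true, true, 2, n - 3)}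

lemma mem_idx {n l r : ℕ} {e d : Bool} {a b : ℕ} : (e, d, a, b) ∈ idx n l r ↔
    (e = false ∧ d = false ∧ a < n ∧ b < n ∧ a ≤ b) ∨
    (e = true ∧ d = false ∧ 2 ≤ a ∧ a ≤ l - 1 ∧ l - 1 ≤ b ∧ b ≤ n - 1) ∨
    (e = false ∧ d = true ∧ a ≤ n - r ∧ n - r ≤ b ∧ b ≤ n - 3) ∨
    (e = true ∧ d = true ∧ a = 2 ∧ b = n - 3) := by
  simp only [idx, idxPlain, idxLeft, idxRight, Finset.mem_union, Finset.mem_product,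
    Finset.mem_singleton, Finset.mem_filter, Finset.mem_range, Finset.mem_Icc, Prod.mk.injEq]
  cases e <;> cases d <;> simp [and_assoc]

lemma two_mul_card_idx (n l r : ℕ) (hl : 3 ≤ l) (hr : 3 ≤ r) (hn : l + r ≤ n) :
    2 * (idx n l r).card =
      n * (n + 1) + 2 * ((l - 2) * (n - l + 1)) + 2 * ((r - 2) * (n - r + 1)) + 2 := by
  have hplain : 2 * (idxPlain n).card = n * (n + 1) := by
    have h : (idxPlain n).card = ∑ b ∈ Finset.range n, (b + 1) := by
      rw [idxPlain, Finset.card_product, Finset.card_product, Finset.card_singleton,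
        Finset.card_filter, Finset.sum_product_right, one_mul, one_mul]
      refine Finset.sum_congr rfl fun b hb => ?_
      rw [← Finset.card_filter, ← Finset.card_range (b + 1)]
      congr 1
      ext a
      simp only [Finset.mem_filter, Finset.mem_range] at hb ⊢
      omega
    rw [h]
    clear h hn
    induction n with
    | zero => simp
    | succ k ih => rw [Finset.sum_range_succ, mul_add, ih]; ring
  have hleft : (idxLeft n l).card = (l - 2) * (n - l + 1) := by
    simp only [idxLeft, Finset.card_product, Finset.card_singleton, Nat.card_Icc, one_mul]
    congr 1
    omega
  have hright : (idxRight n r).card = (r - 2) * (n - r + 1) := by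
    simp only [idxRight, Finset.card_product, Finset.card_singleton, Nat.card_Icc, one_mul]
    rw [mul_comm]
    congr 1; omega
  have hcard : (idx n l r).card =
      (idxPlain n).card + (idxLeft n l).card + (idxRight n r).card + 1 := by
    rw [idx, Finset.card_union_of_disjoint, Finset.card_union_of_disjoint,
      Finset.card_union_of_disjoint, Finset.card_singleton]
    all_goals
      rw [Finset.disjoint_left]
      rintro ⟨e, d, a, b⟩
      simp only [idxPlain, idxLeft, idxRight, Finset.mem_union, Finset.mem_product,
        Finset.mem_singleton, Prod.mk.injEq]
      cases e <;> cases d <;> simp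
  rw [hcard, hleft, hright]
  linarith

set_option maxHeartbeats 1000000 in
/-- Two codes of the same set have the same ends: it suffices to compare membership of the ends of
the two intervals, and of `0, 1, n-2, n-1`, which detect the gaps. -/
lemma vset_injOn {n l r : ℕ} (hl : 3 ≤ l) (hr : 3 ≤ r) (hn : l + r ≤ n) :
    Set.InjOn (vset n) (idx n l r : Set (Bool × Bool × ℕ × ℕ)) := by
  rintro ⟨e, d, a, b⟩ h ⟨e', d', a', b'⟩ h' heq
  rw [Finset.mem_coe, mem_idx] at h h'
  have key : ∀ x < n, ((a ≤ x ∧ x ≤ b) ∨ (e = true ∧ x = 0) ∨ (d = true ∧ x = n - 1)) ↔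
      ((a' ≤ x ∧ x ≤ b') ∨ (e' = true ∧ x = 0) ∨ (d' = true ∧ x = n - 1)) := by
    intro x hx
    exact Set.ext_iff.mp heq ⟨x, hx⟩
  have ka := key a (by omega)
  have kb := key b (by omega)
  have ka' := key a' (by omega)
  have kb' := key b' (by omega)
  have k0 := key 0 (by omega)
  have k1 := key 1 (by omega)
  have k2 := key (n - 1) (by omega)
  have k3 := key (n - 2) (by omega)
  clear key heq
  simp only [Prod.mk.injEq]
  cases e <;> cases d <;> cases e' <;> cases d' <;>
    simp only [Bool.false_eq_true, reduceCtorEq, eq_self, and_true, false_and, true_and, false_or, or_false,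
      and_false, or_true, true_or, iff_true, true_iff, le_refl] at * <;> omega

/-- An interval stays connected after adding an endpoint whose chord ends in the interval. -/
lemma vset_connected {n l r : ℕ} (hl : 3 ≤ l) (hr : 3 ≤ r) (hn : l + r ≤ n)
    {p : Bool × Bool × ℕ × ℕ} (hp : p ∈ idx n l r) :
    (vset n p).Nonempty ∧ ((doubleTadpole n l r).induce (vset n p)).Connected := by
  obtain ⟨e, d, a, b⟩ := p
  rw [mem_idx] at hp
  have hab : a ≤ b := by omega
  have hbn : b < n := by omega
  have he : e = true → a ≤ l - 1 ∧ l - 1 ≤ b := by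
    intro h
    simp only [h, Bool.true_eq_false, eq_self, false_and, true_and, false_or] at hp
    omega
  have hd : d = true → a ≤ n - r ∧ n - r ≤ b := by
    intro h
    simp only [h, Bool.true_eq_false, eq_self, false_and, true_and, and_false, false_or] at hp
    omega
  clear hp
  set S := vset n (e, d, a, b) with hS
  have hin : ∀ x (hx : x < n), a ≤ x → x ≤ b → (⟨x, hx⟩ : Fin n) ∈ S :=
    fun x hx h1 h2 => Or.inl ⟨h1, h2⟩
  have haS := hin a (by omega) le_rfl hab
  have hpath : ∀ k (h : a + k ≤ b), ((doubleTadpole n l r).induce S).Reachable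
      ⟨⟨a, by omega⟩, haS⟩ ⟨⟨a + k, by omega⟩, hin _ _ (by omega) h⟩ := by
    intro k
    induction k with
    | zero => intro h; exact SimpleGraph.Reachable.refl _
    | succ k ih =>
      intro h
      refine (ih (by omega)).trans (SimpleGraph.Adj.reachable ?_)
      rw [SimpleGraph.induce_adj, doubleTadpole_adj hl hr hn]
      exact Or.inl rfl
  have hint : ∀ x (hx : x < n) (h1 : a ≤ x) (h2 : x ≤ b),
      ((doubleTadpole n l r).induce S).Reachable
        ⟨⟨a, by omega⟩, haS⟩ ⟨⟨x, hx⟩, hin x hx h1 h2⟩ := by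
    intro x hx h1 h2
    obtain ⟨k, rfl⟩ := Nat.exists_eq_add_of_le h1
    exact hpath k h2
  refine ⟨⟨_, haS⟩, (SimpleGraph.connected_iff_exists_forall_reachable _).mpr ⟨⟨_, haS⟩, ?_⟩⟩
  rintro ⟨⟨x, hx⟩, hxS⟩
  have hxS' := hxS
  rcases hxS' with ⟨h1, h2⟩ | ⟨h1, h2⟩ | ⟨h1, h2⟩
  · exact hint x hx h1 h2
  · obtain ⟨h3, h4⟩ := he h1
    refine (hint (l - 1) (by omega) h3 h4).trans (SimpleGraph.Adj.reachable ?_)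
    rw [SimpleGraph.induce_adj, doubleTadpole_adj hl hr hn]
    exact Or.inr (Or.inr (Or.inr (Or.inl ⟨h2, rfl⟩)))
  · obtain ⟨h3, h4⟩ := hd h1
    refine (hint (n - r) (by omega) h3 h4).trans (SimpleGraph.Adj.reachable ?_)
    rw [SimpleGraph.induce_adj, doubleTadpole_adj hl hr hn]
    exact Or.inr (Or.inr (Or.inr (Or.inr (Or.inl ⟨rfl, h2⟩))))

/-- A connected set split by a predicate contains an edge between the two parts. -/
lemma exists_crossing {V : Type*} {G : SimpleGraph V} {S : Set V} (hS : (G.induce S).Connected)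
    (P : V → Prop) {x y : V} (hx : x ∈ S) (hy : y ∈ S) (px : P x) (py : ¬ P y) :
    ∃ u ∈ S, ∃ v ∈ S, G.Adj u v ∧ P u ∧ ¬ P v := by
  obtain ⟨w⟩ := hS.preconnected ⟨x, hx⟩ ⟨y, hy⟩
  obtain ⟨q, -, h1, h2⟩ := w.exists_boundary_dart {z | P z.val} px py
  exact ⟨_, q.fst.2, _, q.snd.2, q.adj, h1, h2⟩

set_option maxHeartbeats 1000000 in
/-- Every connected set of `D_n(3; 3)` is one of the listed ones. -/
lemma exists_vset_eq {n : ℕ} (hn : 6 ≤ n) {S : Set (Fin n)} (hne : S.Nonempty)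
    (hS : ((doubleTadpole n 3 3).induce S).Connected) :
    ∃ p ∈ idx n 3 3, vset n p = S := by
  classical
  obtain ⟨m, hmS, hm⟩ := S.exists_min_image id S.toFinite hne
  obtain ⟨M, hMS, hM⟩ := S.exists_max_image id S.toFinite hne
  -- A vertex of the gap is jumped over by one of the two chords.
  have gap : ∀ k : Fin n, k ∉ S → m < k → k < M →
      (k.val = 1 ∧ (⟨0, by omega⟩ : Fin n) ∈ S ∧ (⟨2, by omega⟩ : Fin n) ∈ S) ∨
      (k.val = n - 2 ∧ (⟨n - 3, by omega⟩ : Fin n) ∈ S ∧ (⟨n - 1, by omega⟩ : Fin n) ∈ S) := by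
    intro k hk h1 h2
    obtain ⟨u, hu, v, hv, huv, pu, pv⟩ :=
      exists_crossing hS (fun z => z < k) hmS hMS h1 (not_lt.mpr h2.le)
    rw [doubleTadpole_adj le_rfl le_rfl hn] at huv
    have hvk : v ≠ k := fun h => hk (h ▸ hv)
    rw [ne_eq, Fin.ext_iff] at hvk
    rw [Fin.lt_def] at pu pv
    have hc : (u.val = 0 ∧ v.val = 2 ∧ k.val = 1) ∨
        (u.val = n - 3 ∧ v.val = n - 1 ∧ k.val = n - 2) := by omega
    rcases hc with ⟨hu', hv', hk'⟩ | ⟨hu', hv', hk'⟩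
    · left
      have e1 : u = ⟨0, by omega⟩ := Fin.ext hu'
      have e2 : v = ⟨2, by omega⟩ := Fin.ext hv'
      exact ⟨hk', e1 ▸ hu, e2 ▸ hv⟩
    · right
      have e1 : u = ⟨n - 3, by omega⟩ := Fin.ext hu'
      have e2 : v = ⟨n - 1, by omega⟩ := Fin.ext hv'
      exact ⟨hk', e1 ▸ hu, e2 ▸ hv⟩
  -- The remaining argument is about the predicate `Q` on natural numbers.
  obtain ⟨Q, hQ⟩ : ∃ Q : ℕ → Prop, ∀ x (hx : x < n), Q x ↔ (⟨x, hx⟩ : Fin n) ∈ S :=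
    ⟨fun x => ∃ hx : x < n, (⟨x, hx⟩ : Fin n) ∈ S,
      fun x hx => ⟨fun ⟨_, h⟩ => h, fun h => ⟨hx, h⟩⟩⟩
  have hmQ : Q m.val := (hQ _ m.isLt).mpr hmS
  have hMQ : Q M.val := (hQ _ M.isLt).mpr hMS
  have bd : ∀ x < n, Q x → m.val ≤ x ∧ x ≤ M.val := fun x hx h =>
    ⟨hm _ ((hQ x hx).mp h), hM _ ((hQ x hx).mp h)⟩
  have gapQ : ∀ k < n, ¬ Q k → m.val < k → k < M.val →
      (k = 1 ∧ Q 0 ∧ Q 2) ∨ (k = n - 2 ∧ Q (n - 3) ∧ Q (n - 1)) := by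
    intro k hk h1 h2 h3
    rw [hQ 0 (by omega), hQ 2 (by omega), hQ (n - 3) (by omega), hQ (n - 1) (by omega)]
    exact gap ⟨k, hk⟩ (fun h => h1 ((hQ k hk).mpr h)) h2 h3
  have hmn := m.isLt
  have hMn := M.isLt
  suffices h : ∃ e d a b, (e, d, a, b) ∈ idx n 3 3 ∧ ∀ x < n,
      ((a ≤ x ∧ x ≤ b) ∨ (e = true ∧ x = 0) ∨ (d = true ∧ x = n - 1)) ↔ Q x by
    obtain ⟨e, d, a, b, hp, hx⟩ := h
    refine ⟨_, hp, Set.ext fun x => ?_⟩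
    exact (hx x.val x.isLt).trans (hQ x.val x.isLt)
  have hmM : m.val ≤ M.val := (bd _ hmn hmQ).2
  have b0 := bd 0 (by omega)
  have b2 := bd 2 (by omega)
  have b3 := bd (n - 3) (by omega)
  have b4 := bd (n - 1) (by omega)
  generalize m.val = m at *
  generalize M.val = M at *
  -- Distinguishing points by `Q` is what `grind` needs to turn facts about `Q` into inequalities.
  have aux : ∀ x y, ¬ Q x → Q y → x ≠ y := fun x y h1 h2 h => h1 (h ▸ h2)
  by_cases he : Q 0 ∧ ¬ Q 1 ∧ Q 2 <;> by_cases hd : Q (n - 3) ∧ ¬ Q (n - 2) ∧ Q (n - 1)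
  · refine ⟨true, true, 2, n - 3, mem_idx.mpr (by simp), fun x hx => ?_⟩
    grind
  · refine ⟨true, false, 2, M, mem_idx.mpr ?_, fun x hx => ?_⟩
    · simp; grind
    grind
  · refine ⟨false, true, m, n - 3, mem_idx.mpr ?_, fun x hx => ?_⟩
    · simp; grind
    grind
  · refine ⟨false, false, m, M, mem_idx.mpr ?_, fun x hx => ?_⟩
    · simp; grind
    grind

lemma numCIS_eq_ncard {V : Type*} (G : SimpleGraph V) :
    numCIS G = {S : Set V | S.Nonempty ∧ (G.induce S).Connected}.ncard :=
  Nat.card_coe_set_eq _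

lemma card_idx_le_numCIS {n l r : ℕ} (hl : 3 ≤ l) (hr : 3 ≤ r) (hn : l + r ≤ n) :
    (idx n l r).card ≤ numCIS (doubleTadpole n l r) := by
  rw [numCIS_eq_ncard, ← Set.ncard_coe_finset, ← (vset_injOn hl hr hn).ncard_image]
  refine Set.ncard_le_ncard ?_ (Set.toFinite _)
  rintro _ ⟨p, hp, rfl⟩
  exact vset_connected hl hr hn hp

lemma numCIS_le_card_idx {n : ℕ} (hn : 6 ≤ n) :
    numCIS (doubleTadpole n 3 3) ≤ (idx n 3 3).card := by
  rw [numCIS_eq_ncard, ← Set.ncard_coe_finset,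
    ← (vset_injOn le_rfl le_rfl hn).ncard_image]
  refine Set.ncard_le_ncard ?_ (Set.toFinite _)
  rintro S ⟨h1, h2⟩
  obtain ⟨p, hp, rfl⟩ := exists_vset_eq hn h1 h2
  exact ⟨p, hp, rfl⟩

theorem stmt_14 (n l r : ℕ) (hl : 3 ≤ l) (hr : 3 ≤ r) (hn : l + r ≤ n) :
    2 * numCIS (doubleTadpole n 3 3) = (n - 1) * (n + 6) ∧
    ((l, r) ≠ (3, 3) → numCIS (doubleTadpole n 3 3) < numCIS (doubleTadpole n l r)) := by
  have h6 : 6 ≤ n := by omega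
  have h33 : numCIS (doubleTadpole n 3 3) = (idx n 3 3).card :=
    le_antisymm (numCIS_le_card_idx h6) (card_idx_le_numCIS le_rfl le_rfl h6)
  have hc33 := two_mul_card_idx n 3 3 le_rfl le_rfl h6
  have hc := two_mul_card_idx n l r hl hr hn
  have hlow := card_idx_le_numCIS hl hr hn
  rw [h33]
  constructor
  · rw [hc33]
    obtain ⟨k, rfl⟩ := Nat.exists_eq_add_of_le h6
    rw [show 6 + k - 3 + 1 = k + 4 by omega, show 6 + k - 1 = k + 5 by omega]
    ring
  · intro hne
    -- `(x + 1) * (y + 1) ≥ x + y + 1`, strictly when `x` and `y` are positive.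
    have hprod : ∀ t, 3 ≤ t → t + 3 ≤ n →
        n - 2 ≤ (t - 2) * (n - t + 1) ∧ (t ≠ 3 → n - 2 < (t - 2) * (n - t + 1)) := by
      intro t ht htn
      obtain ⟨x, rfl⟩ := Nat.exists_eq_add_of_le ht
      obtain ⟨y, rfl⟩ := Nat.exists_eq_add_of_le htn
      rw [show 3 + x + 3 + y - 2 = x + y + 4 by omega, show 3 + x - 2 = x + 1 by omega,
        show 3 + x + 3 + y - (3 + x) + 1 = y + 4 by omega]
      refine ⟨by nlinarith, fun h => ?_⟩
      have : 1 ≤ x := by omega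
      nlinarith
    have hL := hprod l hl (by omega)
    have hR := hprod r hr (by omega)
    have hlr : l ≠ 3 ∨ r ≠ 3 := by
      by_contra! h
      exact hne (by rw [h.1, h.2])
    have h1 : (3 - 2) * (n - 3 + 1) = n - 2 := by omega
    rw [h1] at hc33
    rcases hlr with h | h
    · have := hL.2 h
      have := hR.1
      omega
    · have := hR.2 h
      have := hL.1
      omega
end

section
/- Let n > 5 and 3 ≤ l ≤ n − 2, and let G be the graph constructed from two vertex disjoint cycles C_l and C_{n−l+1} by identifying a vertex u of C_l with a vertex v of C_{n−l+1} (so G has n vertices). Then N(G) > N(C_n) > N(D_n), where D_n = D_n(3; 3) is the double tadpole graph of order n. -/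
/-- The cycle on `m` vertices. -/
def cycGraph (m : ℕ) : SimpleGraph (Fin m) :=
  SimpleGraph.fromRel (fun a b => b.val = (a.val + 1) % m)

/-! ### Intervals -/

open Finset in
/-- Gauss's sum, in the form that counts the half-open intervals contained in `[p, q)`. -/
lemma two_mul_sum_Ico_sub (p q : ℕ) :
    2 * ∑ a ∈ Ico p q, (q - a) = (q - p) * (q - p + 1) := by
  rw [sum_Ico_eq_sum_range]
  have h : ∀ k, 2 * ∑ i ∈ range k, (k - i) = k * (k + 1) := by
    intro k
    induction k with
    | zero => simp
    | succ k ih =>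
      rw [sum_range_succ']
      simp only [Nat.add_sub_add_right, Nat.sub_zero, mul_add, ih]
      ring
  rw [← h]
  congr 1
  apply sum_congr rfl
  intro i _
  omega

/-- The half-open interval `[a, b)` of vertices of `Fin n`. -/
def ivl (n a b : ℕ) : Set (Fin n) := {v | a ≤ v.val ∧ v.val < b}

lemma mem_ivl {n a b : ℕ} {v : Fin n} : v ∈ ivl n a b ↔ a ≤ v.val ∧ v.val < b := Iff.rfl

open Classical in
/-- The family of all nonempty intervals `[a, b) ⊆ [p, q)`. -/
noncomputable def ivls (n p q : ℕ) : Finset (Set (Fin n)) :=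
  ((Finset.Ico p q).sigma (fun a => Finset.Ioc a q)).image (fun x => ivl n x.1 x.2)

lemma mem_ivls {n p q : ℕ} {S : Set (Fin n)} :
    S ∈ ivls n p q ↔ ∃ a b, p ≤ a ∧ a < b ∧ b ≤ q ∧ S = ivl n a b := by
  simp only [ivls, Finset.mem_image, Finset.mem_sigma, Finset.mem_Ico, Finset.mem_Ioc]
  constructor
  · rintro ⟨⟨a, b⟩, h, rfl⟩
    exact ⟨a, b, by simp at h; omega, by simp at h; omega, by simp at h; omega, rfl⟩
  · rintro ⟨a, b, h1, h2, h3, rfl⟩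
    exact ⟨⟨a, b⟩, by simp; omega, rfl⟩

lemma ivl_inj {n a b c d : ℕ} (hab : a < b) (hb : b ≤ n) (hcd : c < d) (hd : d ≤ n)
    (h : ivl n a b = ivl n c d) : a = c ∧ b = d := by
  have key : ∀ x, x < n → ((a ≤ x ∧ x < b) ↔ (c ≤ x ∧ x < d)) := fun x hx => by
    have := Set.ext_iff.1 h ⟨x, hx⟩
    simpa only [mem_ivl] using this
  have h1 := key a (by omega)
  have h2 := key c (by omega)
  have h3 := key (b - 1) (by omega)
  have h4 := key (d - 1) (by omega)
  omega

lemma two_mul_card_ivls {n p q : ℕ} (hq : q ≤ n) :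
    2 * (ivls n p q).card = (q - p) * (q - p + 1) := by
  rw [ivls, Finset.card_image_of_injOn, Finset.card_sigma]
  · simp only [Nat.card_Ioc]
    exact two_mul_sum_Ico_sub p q
  · rintro ⟨a, b⟩ h1 ⟨c, d⟩ h2 h
    simp at h1 h2
    dsimp only at h
    obtain ⟨rfl, rfl⟩ := ivl_inj (by omega) (by omega) (by omega) (by omega) h
    rfl

/-- A nonempty set without gaps is an interval. -/
lemma mem_ivls_of_no_gap {n p q : ℕ} {S : Set (Fin n)} (hne : S.Nonempty)
    (hp : ∀ x ∈ S, p ≤ x.val ∧ x.val < q)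
    (hgap : ∀ x ∈ S, ∀ z ∈ S, ∀ y, x < y → y < z → y ∈ S) : S ∈ ivls n p q := by
  obtain ⟨m, hm, hmin⟩ := Set.exists_min_image S id S.toFinite hne
  obtain ⟨M, hM, hmax⟩ := Set.exists_max_image S id S.toFinite hne
  simp only [id] at hmin hmax
  have hmM := hmin M hM
  have h1 := hp m hm
  have h2 := hp M hM
  rw [Fin.le_def] at hmM
  refine mem_ivls.2 ⟨m, M + 1, by omega, by omega, by omega, ?_⟩
  ext v
  rw [mem_ivl]
  constructor
  · intro hv
    have h3 := hmin v hv
    have h4 := hmax v hv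
    rw [Fin.le_def] at h3 h4
    omega
  · rintro ⟨h3, h4⟩
    rcases Nat.eq_or_lt_of_le h3 with h5 | h5
    · rwa [← Fin.ext h5]
    rcases Nat.eq_or_lt_of_le (Nat.le_of_lt_succ h4) with h6 | h6
    · rwa [Fin.ext h6]
    exact hgap m hm M hM v h5 h6

/-! ### Connected sets and their number -/

section Connectivity

variable {V : Type*} {G : SimpleGraph V} {S : Set V}

lemma connected_of_rank (r : V) (hr : r ∈ S) (f : V → ℕ)
    (h : ∀ v ∈ S, v ≠ r → ∃ u ∈ S, G.Adj v u ∧ f u < f v) :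
    S.Nonempty ∧ (G.induce S).Connected := by
  refine ⟨⟨r, hr⟩, ?_⟩
  have key : ∀ k, ∀ v : S, f v = k → (G.induce S).Reachable v ⟨r, hr⟩ := by
    intro k
    induction k using Nat.strong_induction_on with
    | _ k ih =>
      rintro ⟨v, hv⟩ hk
      by_cases hvr : v = r
      · subst hvr
        exact SimpleGraph.Reachable.refl _
      · obtain ⟨u, hu, hadj, hlt⟩ := h v hv hvr
        have h1 : (G.induce S).Adj ⟨v, hv⟩ ⟨u, hu⟩ := hadj
        exact h1.reachable.trans (ih (f u) (by simpa [hk] using hlt) ⟨u, hu⟩ rfl)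
  have : Nonempty S := ⟨⟨r, hr⟩⟩
  exact ⟨fun a b => (key _ a rfl).trans (key _ b rfl).symm⟩

/-- A connected set cannot meet both sides of a cut that none of its edges crosses. -/
lemma not_cut (hc : (G.induce S).Connected) (T : Set V) {s t : V}
    (hs : s ∈ S) (hsT : s ∈ T) (ht : t ∈ S) (htT : t ∉ T)
    (h : ∀ a ∈ S, ∀ b ∈ S, a ∈ T → b ∉ T → ¬ G.Adj a b) : False := by
  obtain ⟨w⟩ := hc.preconnected ⟨s, hs⟩ ⟨t, ht⟩
  have key : ∀ (a b : S), (G.induce S).Walk a b → a.val ∈ T → b.val ∈ T := by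
    intro a b w
    induction w with
    | nil => exact id
    | cons hadj _ ih =>
      intro ha
      apply ih
      by_contra hb
      exact h _ (Subtype.prop _) _ (Subtype.prop _) ha hb hadj
  exact htT (key _ _ w hsT)

end Connectivity

lemma numCIS_le {V : Type*} {G : SimpleGraph V} (F : Finset (Set V))
    (h : ∀ S : Set V, S.Nonempty → (G.induce S).Connected → S ∈ F) : numCIS G ≤ F.card := by
  rw [numCIS_eq_ncard, ← Set.ncard_coe_finset]
  exact Set.ncard_le_ncard (fun S hS => h S hS.1 hS.2) F.finite_toSet

lemma le_numCIS {V : Type*} [Finite V] {G : SimpleGraph V} (F : Finset (Set V))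
    (h : ∀ S ∈ F, S.Nonempty ∧ (G.induce S).Connected) : F.card ≤ numCIS G := by
  rw [numCIS_eq_ncard, ← Set.ncard_coe_finset]
  exact Set.ncard_le_ncard (fun S hS => h S hS) (Set.toFinite _)

/-- Intervals are connected as soon as consecutive vertices inside them are adjacent. -/
lemma connected_ivl {n a b : ℕ} {G : SimpleGraph (Fin n)} (hab : a < b) (hb : b ≤ n)
    (h : ∀ u v : Fin n, a ≤ u.val → v.val < b → v.val = u.val + 1 → G.Adj v u) :
    (ivl n a b).Nonempty ∧ (G.induce (ivl n a b)).Connected := by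
  refine connected_of_rank ⟨a, by omega⟩ ⟨le_refl _, hab⟩ (fun v => v.val) ?_
  intro v hv hne
  rw [mem_ivl] at hv
  have hne' : v.val ≠ a := fun h => hne (Fin.ext h)
  refine ⟨⟨v.val - 1, by omega⟩, ?_, ?_, ?_⟩
  · rw [mem_ivl]; dsimp only; omega
  · exact h _ _ (by dsimp only; omega) hv.2 (by dsimp only; omega)
  · dsimp only; omega

/-! ### The cycle -/

lemma succ_mod_eq {m a : ℕ} (h : a < m) : (a + 1) % m = if a + 1 = m then 0 else a + 1 := by
  split_ifs with h1
  · rw [h1, Nat.mod_self]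
  · exact Nat.mod_eq_of_lt (by omega)

lemma cyc_adj {n : ℕ} (hn : 3 ≤ n) (a b : Fin n) : (cycGraph n).Adj a b ↔
    (b.val = a.val + 1 ∨ a.val = b.val + 1 ∨ (a.val = 0 ∧ b.val = n - 1) ∨
      (b.val = 0 ∧ a.val = n - 1)) := by
  rw [cycGraph, SimpleGraph.fromRel_adj, succ_mod_eq a.2, succ_mod_eq b.2, Ne, Fin.ext_iff]
  have := a.2
  have := b.2
  split_ifs <;> omega

/-- In `C_n`, two vertices missing from a connected set cannot separate it. -/
lemma cyc_cut {n : ℕ} (hn : 3 ≤ n) {S : Set (Fin n)} (hc : ((cycGraph n).induce S).Connected)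
    {a c s t : Fin n} (ha : a ∉ S) (hcS : c ∉ S) (hs : s ∈ S) (ht : t ∈ S)
    (h1 : a.val < s.val) (h2 : s.val < c.val) (h3 : t.val < a.val ∨ c.val < t.val) : False := by
  refine not_cut hc {v | a.val < v.val ∧ v.val < c.val} hs ⟨h1, h2⟩ ht
    (fun h => by have := h.1; have := h.2; omega) ?_
  rintro x hx y hy ⟨hx1, hx2⟩ hyT hadj
  rw [cyc_adj hn] at hadj
  have hya : y.val ≠ a.val := fun h => ha (Fin.ext h ▸ hy)
  have hyc : y.val ≠ c.val := fun h => hcS (Fin.ext h ▸ hy)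
  have hyT' : ¬ (a.val < y.val ∧ y.val < c.val) := hyT
  have := x.2
  have := y.2
  have := c.2
  omega

lemma cyc_connected_iff {n : ℕ} (hn : 3 ≤ n) (S : Set (Fin n)) :
    (S.Nonempty ∧ ((cycGraph n).induce S).Connected) ↔
      S ∈ ivls n 0 n ∨ Sᶜ ∈ ivls n 1 (n - 1) := by
  constructor
  · rintro ⟨hne, hc⟩
    by_cases hgap : ∀ x ∈ S, ∀ z ∈ S, ∀ y, x < y → y < z → y ∈ S
    · exact Or.inl (mem_ivls_of_no_gap hne (fun x _ => ⟨by omega, x.2⟩) hgap)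
    right
    push Not at hgap
    obtain ⟨x, hx, z, hz, y, hxy, hyz, hy⟩ := hgap
    rw [Fin.lt_def] at hxy hyz
    refine mem_ivls_of_no_gap ⟨y, hy⟩ ?_ ?_
    · intro v hv
      constructor
      · by_contra h0
        exact cyc_cut hn hc (a := v) (c := y) hv hy hx hz
          (by
            have : x.val ≠ v.val := fun h => hv (Fin.ext h ▸ hx)
            omega) hxy (Or.inr hyz)
      · by_contra h0
        exact cyc_cut hn hc (a := y) (c := v) hy hv hz hx hyz
          (by
            have : z.val ≠ v.val := fun h => hv (Fin.ext h ▸ hz)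
            have := z.2
            omega) (Or.inl hxy)
    · intro p hp r hr q hpq hqr hq
      rw [Fin.lt_def] at hpq hqr
      rw [Set.mem_compl_iff] at hp hr
      have hq : q ∈ S := by simpa using hq
      have hxp : x.val ≠ p.val := fun h => hp (Fin.ext h ▸ hx)
      have hxr : x.val ≠ r.val := fun h => hr (Fin.ext h ▸ hx)
      have hzp : z.val ≠ p.val := fun h => hp (Fin.ext h ▸ hz)
      have hzr : z.val ≠ r.val := fun h => hr (Fin.ext h ▸ hz)
      by_cases h1 : x.val < p.val ∨ r.val < x.val
      · exact cyc_cut hn hc hp hr hq hx hpq hqr h1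
      by_cases h2 : z.val < p.val ∨ r.val < z.val
      · exact cyc_cut hn hc hp hr hq hz hpq hqr h2
      -- Both `x` and `z` lie between `p` and `r`, so `p` and `y` separate them.
      exact cyc_cut hn hc hp hy hx hz (by omega) hxy (Or.inr hyz)
  · rintro (h | h)
    · obtain ⟨a, b, _, hab, hb, rfl⟩ := mem_ivls.1 h
      exact connected_ivl hab hb (fun u v _ _ h => (cyc_adj hn _ _).2 (Or.inr (Or.inl h)))
    · obtain ⟨a, b, ha, hab, hb, hS⟩ := mem_ivls.1 h
      have hmem : ∀ v : Fin n, v ∈ S ↔ (v.val < a ∨ b ≤ v.val) := by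
        intro v
        have := Set.ext_iff.1 hS v
        rw [Set.mem_compl_iff, mem_ivl] at this
        rw [← not_not (a := v ∈ S), this]
        omega
      refine connected_of_rank ⟨0, by omega⟩ ((hmem _).2 (Or.inl (by dsimp only; omega)))
        (fun v => if v.val < a then v.val else n - v.val) ?_
      intro v hv hne
      have hne' : v.val ≠ 0 := fun h => hne (Fin.ext h)
      have hvn := v.2
      rw [hmem] at hv
      by_cases hva : v.val < a
      · refine ⟨⟨v.val - 1, by omega⟩, ?_, ?_, ?_⟩
        · rw [hmem]; dsimp only; omega
        · rw [cyc_adj hn]; dsimp only; omega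
        · dsimp only; rw [if_pos (by omega), if_pos hva]; omega
      · by_cases hvl : v.val = n - 1
        · refine ⟨⟨0, by omega⟩, ?_, ?_, ?_⟩
          · rw [hmem]; dsimp only; omega
          · rw [cyc_adj hn]; dsimp only; omega
          · dsimp only; rw [if_pos (by omega), if_neg hva]; omega
        · refine ⟨⟨v.val + 1, by omega⟩, ?_, ?_, ?_⟩
          · rw [hmem]; dsimp only; omega
          · rw [cyc_adj hn]; dsimp only; omega
          · dsimp only; rw [if_neg (by omega), if_neg hva]; omega

open Classical in
lemma two_mul_numCIS_cyc {n : ℕ} (hn : 3 ≤ n) :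
    2 * numCIS (cycGraph n) = n * (n + 1) + (n - 2) * (n - 1) := by
  have hset : {S : Set (Fin n) | S.Nonempty ∧ ((cycGraph n).induce S).Connected} =
      ↑(ivls n 0 n ∪ (ivls n 1 (n - 1)).image compl) := by
    ext S
    rw [Set.mem_ofPred_eq, cyc_connected_iff hn, Finset.mem_coe, Finset.mem_union,
      Finset.mem_image]
    refine or_congr Iff.rfl ⟨fun h => ⟨_, h, compl_compl S⟩, ?_⟩
    rintro ⟨T, hT, rfl⟩
    rwa [compl_compl]
  have hdisj : Disjoint (ivls n 0 n) ((ivls n 1 (n - 1)).image compl) := by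
    rw [Finset.disjoint_left]
    intro S h1 h2
    obtain ⟨T, hT, rfl⟩ := Finset.mem_image.1 h2
    obtain ⟨a, b, ha, hab, hb, rfl⟩ := mem_ivls.1 hT
    obtain ⟨c, d, hc, hcd, hd, h⟩ := mem_ivls.1 h1
    have key : ∀ x, x < n → (¬ (a ≤ x ∧ x < b) ↔ (c ≤ x ∧ x < d)) := fun x hx => by
      have := Set.ext_iff.1 h ⟨x, hx⟩
      simpa only [mem_ivl, Set.mem_compl_iff] using this
    -- An interval containing `0` and `n - 1` is everything, but `a` is missing.
    have h3 := key 0 (by omega)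
    have h4 := key (n - 1) (by omega)
    have h5 := key a (by omega)
    omega
  rw [numCIS_eq_ncard, hset, Set.ncard_coe_finset, Finset.card_union_of_disjoint hdisj,
    Finset.card_image_of_injective _ compl_injective, mul_add, two_mul_card_ivls le_rfl,
    two_mul_card_ivls (by omega)]
  congr 2
  omega

/-! ### Two cycles sharing a vertex -/

section Eight

variable {n l : ℕ}

lemma eight_adj_succ (hl : 3 ≤ l) {u v : Fin n} (h : v.val = u.val + 1) :
    (doubleTadpole n l (n + 1 - l)).Adj u v := by
  have hv := v.2
  rw [doubleTadpole, SimpleGraph.fromRel_adj, Ne, Fin.ext_iff]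
  refine ⟨by omega, Or.inl ?_⟩
  by_cases h1 : u.val + 1 < l
  · left
    rw [Nat.mod_eq_of_lt h1]
    omega
  · right; right
    rw [Nat.mod_eq_of_lt (by omega)]
    omega

lemma eight_adj_zero (hl : 3 ≤ l) {u v : Fin n} (hu : u.val = l - 1)
    (hv : v.val = 0) : (doubleTadpole n l (n + 1 - l)).Adj u v := by
  rw [doubleTadpole, SimpleGraph.fromRel_adj, Ne, Fin.ext_iff]
  refine ⟨by omega, Or.inl (Or.inl ⟨by omega, ?_⟩)⟩
  rw [show u.val + 1 = l by omega, Nat.mod_self, hv]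

lemma eight_adj_last (hl : 3 ≤ l) (hl2 : l ≤ n - 2) {u v : Fin n} (hu : u.val = n - 1)
    (hv : v.val = l - 1) : (doubleTadpole n l (n + 1 - l)).Adj u v := by
  rw [doubleTadpole, SimpleGraph.fromRel_adj, Ne, Fin.ext_iff]
  refine ⟨by omega, Or.inl (Or.inr (Or.inr ⟨by omega, ?_⟩))⟩
  rw [show u.val + 1 - (n - (n + 1 - l)) = n + 1 - l by omega, Nat.mod_self]
  omega

/-- Removing a (possibly empty) interval from each of the two cycles, away from the shared
vertex `l - 1`, leaves a connected set. -/
lemma eight_connected_compl (hl : 3 ≤ l) (hl2 : l ≤ n - 2) {a b c d : ℕ}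
    (hb : b ≤ l - 1) (hc : l ≤ c) (hd : d ≤ n) (hab : a ≤ b) (hcd : c ≤ d) :
    ((ivl n a b ∪ ivl n c d)ᶜ : Set (Fin n)).Nonempty ∧
      ((doubleTadpole n l (n + 1 - l)).induce (ivl n a b ∪ ivl n c d)ᶜ).Connected := by
  have hmem : ∀ v : Fin n, v ∈ (ivl n a b ∪ ivl n c d)ᶜ ↔
      (¬ (a ≤ v.val ∧ v.val < b) ∧ ¬ (c ≤ v.val ∧ v.val < d)) := by
    intro v
    rw [Set.mem_compl_iff, Set.mem_union, mem_ivl, mem_ivl, not_or]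
  -- The rank is the distance to the shared vertex along the remaining arc.
  refine connected_of_rank ⟨l - 1, by omega⟩ ((hmem _).2 (by dsimp only; omega))
    (fun v => if v.val ≤ l - 1 then (if v.val < a then v.val + 1 else l - 1 - v.val)
      else (if v.val < c then v.val - (l - 1) else n - v.val)) ?_
  intro v hv hne
  have hne' : v.val ≠ l - 1 := fun h => hne (Fin.ext h)
  have hvn := v.2
  rw [hmem] at hv
  have down : ∀ h : 0 < v.val, (doubleTadpole n l (n + 1 - l)).Adj v ⟨v.val - 1, by omega⟩ :=
    fun h => (eight_adj_succ hl (by dsimp only; omega)).symm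
  have up : ∀ h : v.val + 1 < n, (doubleTadpole n l (n + 1 - l)).Adj v ⟨v.val + 1, h⟩ :=
    fun h => eight_adj_succ hl rfl
  by_cases h1 : v.val ≤ l - 1
  · by_cases h2 : v.val < a
    · by_cases h3 : v.val = 0
      · refine ⟨⟨l - 1, by omega⟩, ?_, (eight_adj_zero hl rfl h3).symm, ?_⟩
        · rw [hmem]; dsimp only; omega
        · dsimp only; split_ifs <;> omega
      · refine ⟨⟨v.val - 1, by omega⟩, ?_, down (by omega), ?_⟩
        · rw [hmem]; dsimp only; omega
        · dsimp only; split_ifs <;> omega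
    · refine ⟨⟨v.val + 1, by omega⟩, ?_, up (by omega), ?_⟩
      · rw [hmem]; dsimp only; omega
      · dsimp only; split_ifs <;> omega
  · by_cases h2 : v.val < c
    · refine ⟨⟨v.val - 1, by omega⟩, ?_, down (by omega), ?_⟩
      · rw [hmem]; dsimp only; omega
      · dsimp only; split_ifs <;> omega
    · by_cases h3 : v.val = n - 1
      · refine ⟨⟨l - 1, by omega⟩, ?_, eight_adj_last hl hl2 h3 rfl, ?_⟩
        · rw [hmem]; dsimp only; omega
        · dsimp only; split_ifs <;> omega
      · refine ⟨⟨v.val + 1, by omega⟩, ?_, up (by omega), ?_⟩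
        · rw [hmem]; dsimp only; omega
        · dsimp only; split_ifs <;> omega

lemma ivl_self (n a : ℕ) : ivl n a a = ∅ := by
  ext v
  rw [mem_ivl]
  simp

lemma empty_notMem_ivls {p q : ℕ} (hq : q ≤ n) : (∅ : Set (Fin n)) ∉ ivls n p q := by
  intro h
  obtain ⟨a, b, _, hab, hb, h⟩ := mem_ivls.1 h
  have : (⟨a, by omega⟩ : Fin n) ∈ (∅ : Set (Fin n)) := by
    rw [h, mem_ivl]
    exact ⟨le_rfl, hab⟩
  exact this

open Classical in
lemma mem_insert_ivls {p q : ℕ} {S : Set (Fin n)} (hpq : p ≤ q)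
    (h : S ∈ insert ∅ (ivls n p q)) : ∃ a b, p ≤ a ∧ a ≤ b ∧ b ≤ q ∧ S = ivl n a b := by
  rcases Finset.mem_insert.1 h with rfl | h
  · exact ⟨p, p, le_rfl, le_rfl, hpq, (ivl_self n p).symm⟩
  · obtain ⟨a, b, h1, h2, h3, h4⟩ := mem_ivls.1 h
    exact ⟨a, b, h1, h2.le, h3, h4⟩

open Classical in
lemma numCIS_eight_ge (hl : 3 ≤ l) (hl2 : l ≤ n - 2) :
    ((ivls n 0 (l - 1)).card + 1) * ((ivls n l n).card + 1) + (ivls n 0 (l - 1)).card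
      + (ivls n l n).card ≤ numCIS (doubleTadpole n l (n + 1 - l)) := by
  have hw : l - 1 < n := by omega
  have hwA : ∀ S ∈ ivls n 0 (l - 1), (⟨l - 1, hw⟩ : Fin n) ∉ S := by
    intro S hS
    obtain ⟨a, b, _, _, _, rfl⟩ := mem_ivls.1 hS
    rw [mem_ivl]
    dsimp only
    omega
  have hwB : ∀ S ∈ ivls n l n, (⟨l - 1, hw⟩ : Fin n) ∉ S := by
    intro S hS
    obtain ⟨a, b, _, _, _, rfl⟩ := mem_ivls.1 hS
    rw [mem_ivl]
    dsimp only
    omega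
  have hwC : ∀ S ∈ (insert ∅ (ivls n 0 (l - 1)) ×ˢ insert ∅ (ivls n l n)).image
      (fun p : Set (Fin n) × Set (Fin n) => (p.1 ∪ p.2)ᶜ), (⟨l - 1, hw⟩ : Fin n) ∈ S := by
    intro S hS
    obtain ⟨⟨I, J⟩, hIJ, rfl⟩ := Finset.mem_image.1 hS
    rw [Finset.mem_product] at hIJ
    obtain ⟨a, b, _, _, _, hI⟩ := mem_insert_ivls (by omega) hIJ.1
    obtain ⟨c, d, _, _, _, hJ⟩ := mem_insert_ivls (by omega) hIJ.2
    dsimp only at hI hJ ⊢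
    rw [hI, hJ, Set.mem_compl_iff, Set.mem_union, mem_ivl, mem_ivl]
    dsimp only
    omega
  have hinj : Set.InjOn (fun p : Set (Fin n) × Set (Fin n) => (p.1 ∪ p.2)ᶜ)
      ↑(insert ∅ (ivls n 0 (l - 1)) ×ˢ insert ∅ (ivls n l n)) := by
    -- The two removed intervals are recovered by intersecting with the vertices below `l`
    -- and with those from `l` on.
    have rec1 : ∀ p ∈ insert ∅ (ivls n 0 (l - 1)) ×ˢ insert ∅ (ivls n l n),
        p.1 = (p.1 ∪ p.2) ∩ {v | v.val < l} ∧ p.2 = (p.1 ∪ p.2) ∩ {v | l ≤ v.val} := by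
      rintro ⟨I, J⟩ hIJ
      rw [Finset.mem_product] at hIJ
      obtain ⟨a, b, _, _, _, hI⟩ := mem_insert_ivls (by omega) hIJ.1
      obtain ⟨c, d, _, _, _, hJ⟩ := mem_insert_ivls (by omega) hIJ.2
      dsimp only at hI hJ ⊢
      subst hI hJ
      constructor <;> ext v <;>
        simp only [Set.mem_inter_iff, Set.mem_union, mem_ivl, Set.mem_ofPred_eq] <;> omega
    intro p hp q hq h
    have h' : p.1 ∪ p.2 = q.1 ∪ q.2 := compl_injective h
    obtain ⟨p1, p2⟩ := rec1 p hp
    obtain ⟨q1, q2⟩ := rec1 q hq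
    exact Prod.ext (by rw [p1, q1, h']) (by rw [p2, q2, h'])
  have hAB : Disjoint (ivls n 0 (l - 1)) (ivls n l n) := by
    rw [Finset.disjoint_left]
    intro S h1 h2
    obtain ⟨a, b, _, hab, hb, rfl⟩ := mem_ivls.1 h1
    obtain ⟨c, d, hc, hcd, hd, h⟩ := mem_ivls.1 h2
    have := ivl_inj hab (by omega) hcd hd h
    omega
  have hcard := le_numCIS (G := doubleTadpole n l (n + 1 - l))
    ((insert ∅ (ivls n 0 (l - 1)) ×ˢ insert ∅ (ivls n l n)).image
      (fun p : Set (Fin n) × Set (Fin n) => (p.1 ∪ p.2)ᶜ) ∪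
      (ivls n 0 (l - 1) ∪ ivls n l n)) ?_
  · rw [Finset.card_union_of_disjoint, Finset.card_union_of_disjoint hAB,
      Finset.card_image_of_injOn hinj, Finset.card_product,
      Finset.card_insert_of_notMem (empty_notMem_ivls (by omega)),
      Finset.card_insert_of_notMem (empty_notMem_ivls le_rfl), ← add_assoc] at hcard
    · exact hcard
    · rw [Finset.disjoint_left]
      intro S h1 h2
      rcases Finset.mem_union.1 h2 with h2 | h2
      · exact hwA S h2 (hwC S h1)
      · exact hwB S h2 (hwC S h1)
  · intro S hS
    rcases Finset.mem_union.1 hS with hS | hS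
    · obtain ⟨⟨I, J⟩, hIJ, rfl⟩ := Finset.mem_image.1 hS
      rw [Finset.mem_product] at hIJ
      obtain ⟨a, b, _, hab, hb, hI⟩ := mem_insert_ivls (by omega) hIJ.1
      obtain ⟨c, d, hc, hcd, hd, hJ⟩ := mem_insert_ivls (by omega) hIJ.2
      dsimp only at hI hJ ⊢
      subst hI hJ
      exact eight_connected_compl hl hl2 hb hc hd hab hcd
    · have : ∃ a b, a < b ∧ b ≤ n ∧ S = ivl n a b := by
        rcases Finset.mem_union.1 hS with hS | hS
        · obtain ⟨a, b, _, hab, hb, h⟩ := mem_ivls.1 hS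
          exact ⟨a, b, hab, by omega, h⟩
        · obtain ⟨a, b, _, hab, hb, h⟩ := mem_ivls.1 hS
          exact ⟨a, b, hab, hb, h⟩
      obtain ⟨a, b, hab, hb, rfl⟩ := this
      exact connected_ivl hab hb (fun u v _ _ h => (eight_adj_succ hl h).symm)

end Eight

/-! ### The double tadpole `D_n(3; 3)` -/

/-- An edge of `D_n(3; 3)` either joins consecutive vertices or is one of `{0, 2}` and
`{n-3, n-1}`. -/
lemma dt_adj {n : ℕ} (hn : 5 < n) {a b : Fin n} (h : (doubleTadpole n 3 3).Adj a b)
    (hab : a.val < b.val) : b.val = a.val + 1 ∨ (a.val = 0 ∧ b.val = 2) ∨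
      (a.val = n - 3 ∧ b.val = n - 1) := by
  rw [doubleTadpole, SimpleGraph.fromRel_adj] at h
  have ha := a.2
  have hb := b.2
  obtain ⟨_, h⟩ := h
  omega

/-- A connected set can only jump over a missing vertex `y` along one of the edges `{0, 2}` and
`{n-3, n-1}`; so `y` is `1` or `n-2`, and the set contains `0`, respectively `n-1`. -/
lemma dt_gap {n : ℕ} (hn : 5 < n) {S : Set (Fin n)}
    (hc : ((doubleTadpole n 3 3).induce S).Connected) {x y z : Fin n} (hx : x ∈ S) (hz : z ∈ S)
    (hy : y ∉ S) (hxy : x.val < y.val) (hyz : y.val < z.val) :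
    (y.val = 1 ∧ ∃ v ∈ S, v.val = 0) ∨ (y.val = n - 2 ∧ ∃ v ∈ S, v.val = n - 1) := by
  by_contra hcon
  push Not at hcon
  refine not_cut hc {v | v.val < y.val} hx hxy hz (fun h : z.val < y.val => by omega) ?_
  intro a ha b hb (haT : a.val < y.val) (hbT : ¬ b.val < y.val) hadj
  have hby : b.val ≠ y.val := fun h => hy (Fin.ext h ▸ hb)
  have h1 := hcon.1
  have h2 := hcon.2
  rcases dt_adj hn hadj (by omega) with h | h | h
  · omega
  · exact h1 (by omega) a ha h.1
  · exact h2 (by omega) b hb h.2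

open Classical in
/-- The candidates for connected sets of `D_n(3; 3)` that are not intervals. -/
noncomputable def dtExtra (n : ℕ) : Finset (Set (Fin n)) :=
  (Finset.Ioc 2 n).image (fun b => ivl n 0 b \ {v | v.val = 1}) ∪
    ((Finset.range (n - 2)).image (fun a => ivl n a n \ {v | v.val = n - 2}) ∪
      {(ivl n 0 n \ {v | v.val = 1}) \ {v | v.val = n - 2}})

lemma card_dtExtra_le {n : ℕ} (hn : 5 < n) : (dtExtra n).card ≤ 2 * n - 3 := by
  classical
  have h1 := Finset.card_image_le (s := Finset.Ioc 2 n)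
    (f := fun b => ivl n 0 b \ {v | v.val = 1})
  have h2 := Finset.card_image_le (s := Finset.range (n - 2))
    (f := fun a => ivl n a n \ {v | v.val = n - 2})
  rw [Nat.card_Ioc] at h1
  rw [Finset.card_range] at h2
  unfold dtExtra
  refine (Finset.card_union_le _ _).trans ?_
  have h3 := Finset.card_union_le
    ((Finset.range (n - 2)).image (fun a => ivl n a n \ {v | v.val = n - 2}))
    {(ivl n 0 n \ {v | v.val = 1}) \ {v | v.val = n - 2}}
  rw [Finset.card_singleton] at h3
  omega

lemma dt_classify {n : ℕ} (hn : 5 < n) {S : Set (Fin n)} (hne : S.Nonempty)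
    (hc : ((doubleTadpole n 3 3).induce S).Connected) : S ∈ ivls n 0 n ∨ S ∈ dtExtra n := by
  by_cases hgap : ∀ x ∈ S, ∀ z ∈ S, ∀ y, x < y → y < z → y ∈ S
  · exact Or.inl (mem_ivls_of_no_gap hne (fun x _ => ⟨by omega, x.2⟩) hgap)
  right
  obtain ⟨m, hm, hmin⟩ := Set.exists_min_image S id S.toFinite hne
  obtain ⟨M, hM, hmax⟩ := Set.exists_max_image S id S.toFinite hne
  simp only [id, Fin.le_def] at hmin hmax
  have hMn := M.2
  -- Strictly between `m` and `M`, only `1` and `n - 2` can be missing.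
  have hin : ∀ v : Fin n, m.val ≤ v.val → v.val ≤ M.val → v ∉ S →
      (v.val = 1 ∧ m.val = 0 ∧ 1 < M.val) ∨ (v.val = n - 2 ∧ M.val = n - 1 ∧ m.val < n - 2) := by
    intro v h1 h2 hv
    have hvm : m.val ≠ v.val := fun h => hv (Fin.ext h ▸ hm)
    have hvM : M.val ≠ v.val := fun h => hv (Fin.ext h ▸ hM)
    rcases dt_gap hn hc hm hM hv (by omega) (by omega) with ⟨h, u, hu, hu0⟩ | ⟨h, u, hu, hu0⟩
    · have := hmin u hu
      omega
    · have := hmax u hu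
      omega
  have hgap' : ∃ v : Fin n, m.val ≤ v.val ∧ v.val ≤ M.val ∧ v ∉ S := by
    push Not at hgap
    obtain ⟨x, hx, z, hz, y, hxy, hyz, hy⟩ := hgap
    have := hmin x hx
    have := hmax z hz
    rw [Fin.lt_def] at hxy hyz
    exact ⟨y, by omega, by omega, hy⟩
  have h1n : 1 < n := by omega
  have h2n : n - 2 < n := by omega
  have hmem : ∀ v : Fin n, v ∈ S ↔ m.val ≤ v.val ∧ v.val ≤ M.val ∧
      ¬ (v.val = 1 ∧ (⟨1, h1n⟩ : Fin n) ∉ S) ∧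
      ¬ (v.val = n - 2 ∧ (⟨n - 2, h2n⟩ : Fin n) ∉ S) := by
    intro v
    constructor
    · intro hv
      refine ⟨hmin v hv, hmax v hv, fun h => h.2 ?_, fun h => h.2 ?_⟩
      · rwa [← (Fin.ext h.1 : v = ⟨1, h1n⟩)]
      · rwa [← (Fin.ext h.1 : v = ⟨n - 2, h2n⟩)]
    · rintro ⟨h1, h2, h3, h4⟩
      by_contra hv
      rcases hin v h1 h2 hv with h | h
      · exact h3 ⟨h.1, by rwa [← (Fin.ext h.1 : v = ⟨1, h1n⟩)]⟩
      · exact h4 ⟨h.1, by rwa [← (Fin.ext h.1 : v = ⟨n - 2, h2n⟩)]⟩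
  unfold dtExtra
  rw [Finset.mem_union, Finset.mem_union, Finset.mem_image, Finset.mem_image,
    Finset.mem_singleton]
  by_cases A : (∃ v : Fin n, v.val = 1 ∧ m.val ≤ v.val ∧ v.val ≤ M.val ∧ v ∉ S)
  · obtain ⟨v, hv1, hvm, hvM, hvS⟩ := A
    have hv : v = ⟨1, h1n⟩ := Fin.ext hv1
    rw [hv] at hvS
    have hA := hin ⟨1, h1n⟩ (by dsimp only; omega) (by dsimp only; omega) hvS
    dsimp only at hA
    by_cases B : (∃ v : Fin n, v.val = n - 2 ∧ m.val ≤ v.val ∧ v.val ≤ M.val ∧ v ∉ S)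
    · obtain ⟨u, hu1, hum, huM, huS⟩ := B
      have hu : u = ⟨n - 2, h2n⟩ := Fin.ext hu1
      rw [hu] at huS
      have hB := hin ⟨n - 2, h2n⟩ (by dsimp only; omega) (by dsimp only; omega) huS
      dsimp only at hB
      right; right
      ext x
      have hx := x.2
      simp only [Set.mem_sdiff, mem_ivl, Set.mem_ofPred_eq]
      rw [hmem x]
      simp only [hvS, huS, not_false_iff, and_true]
      omega
    · left
      refine ⟨M.val + 1, Finset.mem_Ioc.2 (by omega), ?_⟩
      ext x
      simp only [Set.mem_sdiff, mem_ivl, Set.mem_ofPred_eq]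
      rw [hmem x]
      have hB : m.val ≤ x.val → x.val ≤ M.val →
          ¬ (x.val = n - 2 ∧ (⟨n - 2, h2n⟩ : Fin n) ∉ S) := fun h1 h2 h3 =>
        B ⟨⟨n - 2, h2n⟩, rfl, by dsimp only; omega, by dsimp only; omega, h3.2⟩
      simp only [hvS, not_false_iff, and_true]
      constructor
      · rintro ⟨h1, h2⟩
        exact ⟨by omega, by omega, h2, hB (by omega) (by omega)⟩
      · rintro ⟨h1, h2, h3, _⟩
        exact ⟨by omega, h3⟩
  · right; left
    -- The gap is not at `1`, hence it is at `n - 2`.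
    obtain ⟨v, hvm, hvM, hvS⟩ := hgap'
    have hv : v.val = n - 2 ∧ M.val = n - 1 ∧ m.val < n - 2 := by
      rcases hin v hvm hvM hvS with h | h
      · exact absurd ⟨v, h.1, hvm, hvM, hvS⟩ A
      · exact h
    have huS : (⟨n - 2, h2n⟩ : Fin n) ∉ S := by rwa [← (Fin.ext hv.1 : v = ⟨n - 2, h2n⟩)]
    refine ⟨m.val, Finset.mem_range.2 hv.2.2, ?_⟩
    ext x
    have hx := x.2
    simp only [Set.mem_sdiff, mem_ivl, Set.mem_ofPred_eq]
    rw [hmem x]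
    have hB : m.val ≤ x.val → x.val ≤ M.val →
        ¬ (x.val = 1 ∧ (⟨1, h1n⟩ : Fin n) ∉ S) := fun h1 h2 h3 =>
      A ⟨⟨1, h1n⟩, rfl, by dsimp only; omega, by dsimp only; omega, h3.2⟩
    simp only [huS, not_false_iff, and_true]
    constructor
    · rintro ⟨h1, h2⟩
      exact ⟨by omega, by omega, hB (by omega) (by omega), h2⟩
    · rintro ⟨h1, h2, _, h3⟩
      exact ⟨by omega, h3⟩

lemma two_mul_numCIS_dt_le {n : ℕ} (hn : 5 < n) :
    2 * numCIS (doubleTadpole n 3 3) ≤ n * (n + 1) + 2 * (2 * n - 3) := by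
  classical
  have h := numCIS_le (G := doubleTadpole n 3 3) (ivls n 0 n ∪ dtExtra n)
    (fun S hne hc => Finset.mem_union.2 (dt_classify hn hne hc))
  have h1 := Finset.card_union_le (ivls n 0 n) (dtExtra n)
  have h2 := card_dtExtra_le hn
  have h3 := two_mul_card_ivls (n := n) (p := 0) (q := n) le_rfl
  rw [Nat.sub_zero] at h3
  omega

/-- Two cycles `C_l`, `C_{n-l+1}` glued at one vertex have more connected induced subgraphs
than `C_n`, which in turn has more than the double tadpole `D_n = D_n(3; 3)`. -/
theorem stmt_15 (n l : ℕ) (hn : 5 < n) (hl : 3 ≤ l) (hl2 : l ≤ n - 2) :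
    numCIS (cycGraph n) < numCIS (doubleTadpole n l (n + 1 - l)) ∧
    numCIS (doubleTadpole n 3 3) < numCIS (cycGraph n) := by
  have hC := two_mul_numCIS_cyc (n := n) (by omega)
  constructor
  · have hG := numCIS_eight_ge hl hl2
    have hA := two_mul_card_ivls (n := n) (p := 0) (q := l - 1) (by omega)
    have hB := two_mul_card_ivls (n := n) (p := l) (q := n) le_rfl
    generalize (ivls n 0 (l - 1)).card = A at *
    generalize (ivls n l n).card = B at *
    -- The cycles have lengths `i + 3` and `j + 3`.
    obtain ⟨i, rfl⟩ : ∃ i, l = i + 3 := ⟨l - 3, by omega⟩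
    obtain ⟨j, rfl⟩ : ∃ j, n = i + j + 5 := ⟨n - i - 5, by omega⟩
    rw [show i + 3 - 1 - 0 = i + 2 by omega] at hA
    rw [show i + j + 5 - (i + 3) = j + 2 by omega] at hB
    rw [show i + j + 5 - 2 = i + j + 3 by omega, show i + j + 5 - 1 = i + j + 4 by omega] at hC
    have hAB : 4 * (A * B) = (i + 2) * (i + 2 + 1) * ((j + 2) * (j + 2 + 1)) := by
      rw [← hA, ← hB]; ring
    have hpos : 8 * ((i + 2) * (j + 2)) <
        (i + 2) * (i + 2 + 1) * ((j + 2) * (j + 2 + 1)) := by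
      have : 8 < (i + 3) * (j + 3) := by nlinarith
      calc 8 * ((i + 2) * (j + 2)) < ((i + 3) * (j + 3)) * ((i + 2) * (j + 2)) :=
            Nat.mul_lt_mul_of_pos_right this (by positivity)
        _ = _ := by ring
    nlinarith
  · have hD := two_mul_numCIS_dt_le hn
    obtain ⟨k, rfl⟩ : ∃ k, n = k + 6 := ⟨n - 6, by omega⟩
    rw [show 2 * (k + 6) - 3 = 2 * k + 9 by omega] at hD
    rw [show k + 6 - 2 = k + 4 by omega, show k + 6 - 1 = k + 5 by omega] at hC
    nlinarith
end

section
/- Let L and R be two fixed non-trivial (order at least two) vertex disjoint connected graphs with u ∈ V(L) and v ∈ V(R). For positive integers k and q ≥ 2, let H(k; q) be the graph obtained from L, R and two vertex disjoint paths P_k, P_q (disjoint from L and R) by identifying u with both a leaf of P_k and a leaf of P_q, and identifying v with the other leaf of P_q. If k > 1, then N(H(k; q)) > N(H(1; q+k−1)). -/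
/-- `Hgr L R u v k q` is the graph `H(k; q)` (for `q ≥ 2`): the disjoint graphs `L` and `R`
together with a pendant path `P_k` whose leaf is identified with `u ∈ V(L)` (contributing
`k - 1` new vertices) and a path `P_q` whose two leaves are identified with `u` and with
`v ∈ V(R)` (contributing `q - 2` new internal vertices; for `q = 2` it is the edge `uv`). -/
def Hgr {VL VR : Type*} (L : SimpleGraph VL) (R : SimpleGraph VR) (u : VL) (v : VR)
    (k q : ℕ) : SimpleGraph ((VL ⊕ VR) ⊕ (Fin (k - 1) ⊕ Fin (q - 2))) :=
  SimpleGraph.fromRel (fun a b =>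
    match a, b with
    | Sum.inl (Sum.inl a), Sum.inl (Sum.inl b) => L.Adj a b
    | Sum.inl (Sum.inr a), Sum.inl (Sum.inr b) => R.Adj a b
    | Sum.inl (Sum.inl a), Sum.inl (Sum.inr b) => a = u ∧ b = v ∧ q = 2
    | Sum.inl (Sum.inl a), Sum.inr (Sum.inl i) => a = u ∧ i.val = 0
    | Sum.inr (Sum.inl i), Sum.inr (Sum.inl j) => j.val = i.val + 1
    | Sum.inl (Sum.inl a), Sum.inr (Sum.inr i) => a = u ∧ i.val = 0
    | Sum.inl (Sum.inr b), Sum.inr (Sum.inr i) => b = v ∧ i.val + 3 = q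
    | Sum.inr (Sum.inr i), Sum.inr (Sum.inr j) => j.val = i.val + 1
    | _, _ => False)

/-! ### Connected vertex sets -/

/-- The family of vertex sets `S` with `T ⊆ S ⊆ A` inducing a connected subgraph of `G`. -/
def connSets {V : Type*} (G : SimpleGraph V) (A T : Set V) : Set (Set V) :=
  {S | S ⊆ A ∧ T ⊆ S ∧ (G.induce S).Connected}

/-- The number of connected vertex sets lying between `T` and `A`: all connected subsets of `A` for
`T = ∅`, those through `x` for `T = {x}`. -/
noncomputable def numBetween {V : Type*} (G : SimpleGraph V) (A T : Set V) : ℕ :=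
  (connSets G A T).ncard

/-- Connectedness passes along surjections that send each edge to an edge or collapse it. -/
lemma connected_of_retract {V W : Type*} {G : SimpleGraph V} {H : SimpleGraph W}
    (hG : G.Connected) (r : V → W) (hr : Function.Surjective r)
    (h : ∀ a b, G.Adj a b → r a = r b ∨ H.Adj (r a) (r b)) : H.Connected := by
  have key : ∀ a b, G.Reachable a b → H.Reachable (r a) (r b) := by
    rintro a b ⟨p⟩
    induction p with
    | nil => exact SimpleGraph.Reachable.refl _
    | cons hadj _ ih =>
      rcases h _ _ hadj with e | e
      · rw [e]; exact ih
      · exact e.reachable.trans ih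
  have : Nonempty W := hG.nonempty.map r
  refine SimpleGraph.Connected.mk fun a b => ?_
  obtain ⟨a, rfl⟩ := hr a
  obtain ⟨b, rfl⟩ := hr b
  exact key a b (hG.preconnected a b)

/-- If every edge leaving `A` starts at `x`, a connected set meeting both `A` and its complement
contains an edge across, and contracting the outside to `x` shows its trace on `A` is connected. -/
lemma trace_connected {V : Type*} {G : SimpleGraph V} {S A : Set V} {x y : V}
    (hS : (G.induce S).Connected) (hA : (S ∩ A).Nonempty) (hA' : (S \ A).Nonempty)
    (h : ∀ a ∈ A, ∀ b ∈ S \ A, G.Adj a b → a = x ∧ b = y) :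
    x ∈ S ∧ y ∈ S ∧ (G.induce (S ∩ A)).Connected := by
  classical
  obtain ⟨a, haS, haA⟩ := hA
  obtain ⟨b, hbS, hbA⟩ := hA'
  obtain ⟨p⟩ := hS.preconnected ⟨a, haS⟩ ⟨b, hbS⟩
  obtain ⟨d, -, hd1, hd2⟩ := p.exists_boundary_dart {z | z.1 ∈ A} haA hbA
  obtain ⟨e1, e2⟩ := h _ hd1 _ ⟨d.snd.2, hd2⟩ d.adj
  have hxS : x ∈ S := e1 ▸ d.fst.2
  have hxA : x ∈ A := e1 ▸ hd1
  refine ⟨hxS, e2 ▸ d.snd.2, ?_⟩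
  refine connected_of_retract hS
    (fun s => if hs : s.1 ∈ A then ⟨s.1, s.2, hs⟩ else ⟨x, hxS, hxA⟩) ?_ ?_
  · rintro ⟨s, hs, hs'⟩
    exact ⟨⟨s, hs⟩, by simp [hs']⟩
  · rintro ⟨s, hs⟩ ⟨t, ht⟩ hst
    have hst' : G.Adj s t := hst
    by_cases h1 : s ∈ A <;> by_cases h2 : t ∈ A
    · right; simpa [h1, h2] using hst'
    · left; simp [h2, (h s h1 t ⟨ht, h2⟩ hst').1]
    · left; simp [h1, (h t h2 s ⟨hs, h1⟩ hst'.symm).1]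
    · left; simp [h1, h2]

lemma union_connected {V : Type*} {G : SimpleGraph V} {S T : Set V} {x y : V}
    (hS : (G.induce S).Connected) (hT : (G.induce T).Connected) (hx : x ∈ S) (hy : y ∈ T)
    (hxy : G.Adj x y) : (G.induce (S ∪ T)).Connected := by
  have h1 := SimpleGraph.induce_union_connected hS.preconnected
    (SimpleGraph.induce_pair_connected_of_adj hxy).preconnected ⟨x, hx, by simp⟩
  have h2 := SimpleGraph.induce_union_connected h1.preconnected hT.preconnected
    ⟨y, Or.inr (by simp), hy⟩
  have e : S ∪ {x, y} ∪ T = S ∪ T := by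
    ext z
    simp only [Set.mem_union, Set.mem_insert_iff, Set.mem_singleton_iff]
    grind
  rwa [e] at h2

/-- A union of a subset of `A` and a subset of a disjoint set `B` determines both parts. -/
lemma ncard_glue {V : Type*} [Finite V] {A B : Set V} (hAB : Disjoint A B)
    {X Y : Set (Set V)} (hX : ∀ S ∈ X, S ⊆ A) (hY : ∀ S ∈ Y, S ⊆ B) :
    (Set.image2 (· ∪ ·) X Y).ncard = X.ncard * Y.ncard := by
  rw [← Set.image_prod, Set.InjOn.ncard_image, Set.ncard_prod]
  rintro ⟨s, t⟩ ⟨hs, ht⟩ ⟨s', t'⟩ ⟨hs', ht'⟩ h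
  have := hX s hs; have := hX s' hs'; have := hY t ht; have := hY t' ht'
  simp only at *
  rw [Set.disjoint_left] at hAB
  have e : ∀ z, (z ∈ s ∨ z ∈ t) ↔ (z ∈ s' ∨ z ∈ t') := fun z => by
    simpa using Set.ext_iff.1 h z
  ext z
  · have := e z; grind
  · have := e z; grind

lemma mem_connSets {V : Type*} {G : SimpleGraph V} {A T S : Set V} :
    S ∈ connSets G A T ↔ S ⊆ A ∧ T ⊆ S ∧ (G.induce S).Connected := Iff.rfl

/-! ### Gluing along a bridge -/

section Bridge

variable {V : Type*} {G : SimpleGraph V} {A B : Set V} {x y : V}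

/-- Across a bridge `xy` between `A` and `B`, the connected sets meeting both sides are the unions
of a connected subset of `A` through `x` and one of `B` through `y`. -/
lemma mem_glue_iff (hAB : Disjoint A B)
    (h : ∀ a ∈ A, ∀ b ∈ B, G.Adj a b ↔ a = x ∧ b = y) (S : Set V) :
    S ∈ Set.image2 (· ∪ ·) (connSets G A {x}) (connSets G B {y}) ↔
      S ⊆ A ∪ B ∧ (G.induce S).Connected ∧ (S ∩ A).Nonempty ∧ (S ∩ B).Nonempty := by
  rw [Set.disjoint_left] at hAB
  constructor
  · rintro ⟨S, ⟨hSA, hxS, hS⟩, T, ⟨hTB, hyT, hT⟩, rfl⟩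
    rw [Set.singleton_subset_iff] at hxS hyT
    exact ⟨Set.union_subset_union hSA hTB,
      union_connected hS hT hxS hyT ((h x (hSA hxS) y (hTB hyT)).2 ⟨rfl, rfl⟩),
      ⟨x, Or.inl hxS, hSA hxS⟩, ⟨y, Or.inr hyT, hTB hyT⟩⟩
  · rintro ⟨hS, hc, ⟨a, haS, haA⟩, ⟨b, hbS, hbB⟩⟩
    have hSA : ∀ z ∈ S \ A, z ∈ B := fun z hz => (hS hz.1).resolve_left hz.2
    have hSB : ∀ z ∈ S \ B, z ∈ A := fun z hz => (hS hz.1).resolve_right hz.2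
    obtain ⟨hx, hy, cA⟩ := trace_connected (A := A) (x := x) (y := y) hc ⟨a, haS, haA⟩
      ⟨b, hbS, fun hb => hAB hb hbB⟩
      (fun s hs t ht hst => (h s hs t (hSA t ht)).1 hst)
    obtain ⟨-, -, cB⟩ := trace_connected (A := B) (x := y) (y := x) hc ⟨b, hbS, hbB⟩
      ⟨a, haS, hAB haA⟩
      (fun s hs t ht hst => ((h t (hSB t ht) s hs).1 hst.symm).symm)
    have hab : x ∈ A ∧ y ∈ B := by
      obtain ⟨p⟩ := hc.preconnected ⟨a, haS⟩ ⟨b, hbS⟩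
      obtain ⟨d, -, hd1, hd2⟩ := p.exists_boundary_dart {z | z.1 ∈ A} haA
        (fun hb => hAB hb hbB)
      have hd3 := hSA _ ⟨d.snd.2, hd2⟩
      obtain ⟨e1, e2⟩ := (h _ hd1 _ hd3).1 d.adj
      exact ⟨e1 ▸ hd1, e2 ▸ hd3⟩
    refine ⟨S ∩ A, ⟨Set.inter_subset_right, by simpa using ⟨hx, hab.1⟩, cA⟩, S ∩ B,
      ⟨Set.inter_subset_right, by simpa using ⟨hy, hab.2⟩, cB⟩, ?_⟩
    simp only
    rw [← Set.inter_union_distrib_left]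
    exact Set.inter_eq_left.2 hS

lemma nonempty_of_connected {S : Set V} (h : (G.induce S).Connected) : S.Nonempty :=
  Set.nonempty_coe_sort.1 h.nonempty

variable [Finite V]

lemma numBetween_bridge (hAB : Disjoint A B)
    (h : ∀ a ∈ A, ∀ b ∈ B, G.Adj a b ↔ a = x ∧ b = y) :
    numBetween G (A ∪ B) ∅ = numBetween G A ∅ + numBetween G B ∅ +
      numBetween G A {x} * numBetween G B {y} := by
  have hd := Set.disjoint_left.1 hAB
  have hg := mem_glue_iff hAB h
  unfold numBetween
  rw [← ncard_glue hAB (fun S hS => hS.1) (fun S hS => hS.1),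
    ← Set.ncard_union_eq, ← Set.ncard_union_eq]
  · congr 1
    ext S
    rw [Set.mem_union, Set.mem_union, hg]
    simp only [mem_connSets, Set.empty_subset, true_and]
    constructor
    · rintro ⟨hS, hc⟩
      by_cases h1 : (S ∩ A).Nonempty
      · by_cases h2 : (S ∩ B).Nonempty
        · exact Or.inr ⟨hS, hc, h1, h2⟩
        · refine Or.inl (Or.inl ⟨fun z hz => (hS hz).resolve_right fun hb => h2 ⟨z, hz, hb⟩, hc⟩)
      · refine Or.inl (Or.inr ⟨fun z hz => (hS hz).resolve_left fun hb => h1 ⟨z, hz, hb⟩, hc⟩)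
    · rintro ((⟨hS, hc⟩ | ⟨hS, hc⟩) | ⟨hS, hc, -⟩)
      · exact ⟨hS.trans Set.subset_union_left, hc⟩
      · exact ⟨hS.trans Set.subset_union_right, hc⟩
      · exact ⟨hS, hc⟩
  · rw [Set.disjoint_left]
    intro S hS hS'
    obtain ⟨-, -, ⟨a, ha, haA⟩, ⟨b, hb, hbB⟩⟩ := (hg S).1 hS'
    rcases hS with hS | hS
    · exact hd (hS.1 hb) hbB
    · exact hd haA (hS.1 ha)
  · rw [Set.disjoint_left]
    intro S hS hS'
    obtain ⟨z, hz⟩ := nonempty_of_connected hS.2.2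
    exact hd (hS.1 hz) (hS'.1 hz)

lemma numBetween_bridge_root (hAB : Disjoint A B) (hx : x ∈ A)
    (h : ∀ a ∈ A, ∀ b ∈ B, G.Adj a b ↔ a = x ∧ b = y) :
    numBetween G (A ∪ B) {x} = numBetween G A {x} * (1 + numBetween G B {y}) := by
  have hd := Set.disjoint_left.1 hAB
  have hg := mem_glue_iff hAB h
  unfold numBetween
  rw [mul_add, mul_one, ← ncard_glue hAB (fun S hS => hS.1) (fun S hS => hS.1),
    ← Set.ncard_union_eq]
  · congr 1
    ext S
    rw [Set.mem_union]
    constructor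
    · rintro ⟨hS, hxS, hc⟩
      by_cases h2 : (S ∩ B).Nonempty
      · exact Or.inr ((hg S).2 ⟨hS, hc, ⟨x, by simpa using hxS, hx⟩, h2⟩)
      · exact Or.inl ⟨fun z hz => (hS hz).resolve_right fun hb => h2 ⟨z, hz, hb⟩, hxS, hc⟩
    · rintro (⟨hS, hxS, hc⟩ | hS)
      · exact ⟨hS.trans Set.subset_union_left, hxS, hc⟩
      · obtain ⟨h1, h2, -, -⟩ := (hg S).1 hS
        obtain ⟨S, hS, T, hT, rfl⟩ := hS
        exact ⟨h1, hS.2.1.trans Set.subset_union_left, h2⟩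
  · rw [Set.disjoint_left]
    intro S hS hS'
    obtain ⟨-, -, -, ⟨b, hb, hbB⟩⟩ := (hg S).1 hS'
    exact hd (hS.1 hb) hbB

end Bridge

/-! ### Paths grown from a root -/

lemma singleton_connected {V : Type*} (G : SimpleGraph V) (w : V) :
    (G.induce {w}).Connected := by
  have : Nonempty ({w} : Set V) := ⟨⟨w, rfl⟩⟩
  exact SimpleGraph.Connected.mk fun a b => by
    rw [Subsingleton.elim a b]

lemma numBetween_singleton {V : Type*} (G : SimpleGraph V) (w : V) :
    numBetween G {w} ∅ = 1 ∧ numBetween G {w} {w} = 1 := by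
  have key : connSets G {w} ∅ = {{w}} ∧ connSets G {w} {w} = {{w}} := by
    constructor
    · ext S
      constructor
      · rintro ⟨hS, -, hc⟩
        exact (Set.subset_singleton_iff_eq.1 hS).resolve_left (nonempty_of_connected hc).ne_empty
      · rintro rfl
        exact ⟨subset_rfl, Set.empty_subset _, singleton_connected G w⟩
    · ext S
      constructor
      · rintro ⟨hS, hw, -⟩
        exact hS.antisymm hw
      · rintro rfl
        exact ⟨subset_rfl, subset_rfl, singleton_connected G w⟩
  simp [numBetween, key.1, key.2]

lemma numBetween_empty {V : Type*} (G : SimpleGraph V) (T : Set V) : numBetween G ∅ T = 0 := by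
  have : connSets G ∅ T = ∅ := by
    ext S
    simp only [Set.mem_empty_iff_false, iff_false]
    rintro ⟨hS, -, hc⟩
    exact (nonempty_of_connected hc).ne_empty (Set.subset_empty_iff.1 hS)
  simp [numBetween, this]

/-- Growing a path `p 1, …, p n` out of the vertex `p 0` of `B`. The vertex `p 0` need not lie in
`B`: for `B = ∅` this counts the connected sets of a path on `n` vertices. -/
lemma numBetween_chain {V : Type*} [Finite V] {G : SimpleGraph V} {B : Set V} (p : ℕ → V) (n : ℕ)
    (hB : ∀ i < n, p (i + 1) ∉ B)
    (hBadj : ∀ i < n, ∀ z ∈ B, G.Adj (p (i + 1)) z ↔ i = 0 ∧ z = p 0)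
    (hp : ∀ i < n, ∀ j < i, p (i + 1) ≠ p (j + 1))
    (hpadj : ∀ i < n, ∀ j < i, G.Adj (p (i + 1)) (p (j + 1)) ↔ j + 1 = i) :
    numBetween G (B ∪ (fun i => p (i + 1)) '' Set.Iio n) {p n} = numBetween G B {p 0} + n ∧
    numBetween G (B ∪ (fun i => p (i + 1)) '' Set.Iio n) ∅ =
      numBetween G B ∅ + ∑ i ∈ Finset.range n, (1 + numBetween G B {p 0} + i) := by
  induction n with
  | zero => simp
  | succ n ih =>
    obtain ⟨ih1, ih2⟩ := ih (fun i hi => hB i (by omega)) (fun i hi => hBadj i (by omega))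
      (fun i hi => hp i (by omega)) (fun i hi => hpadj i (by omega))
    set C := B ∪ (fun i => p (i + 1)) '' Set.Iio n with hC
    have hCC : B ∪ (fun i => p (i + 1)) '' Set.Iio (n + 1) = {p (n + 1)} ∪ C := by
      have : Set.Iio (n + 1) = insert n (Set.Iio n) := by
        ext; simp only [Set.mem_Iio, Set.mem_insert_iff]; omega
      rw [this, Set.image_insert_eq, hC, Set.singleton_union, Set.union_insert]
    -- the new vertex `p (n + 1)` is attached to `C` by the single edge to `p n`
    have hdisj : Disjoint {p (n + 1)} C := by
      rw [Set.disjoint_singleton_left]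
      rintro (h | ⟨j, hj, h⟩)
      · exact hB n (by omega) h
      · exact hp n (by omega) j hj h.symm
    have hadj : ∀ a ∈ ({p (n + 1)} : Set V), ∀ b ∈ C,
        G.Adj a b ↔ a = p (n + 1) ∧ b = p n := by
      rintro _ rfl b hb
      simp only [true_and]
      rcases hb with hb | ⟨j, hj, rfl⟩
      · rw [hBadj n (by omega) b hb]
        rcases n with _ | n
        · simp
        · simp only [Nat.add_eq_zero_iff, one_ne_zero, and_false, false_and, false_iff]
          rintro rfl
          exact hB n (by omega) hb
      · simp only [Set.mem_Iio] at hj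
        simp only
        rw [hpadj n (by omega) j hj]
        constructor
        · rintro rfl; rfl
        · intro e
          by_contra hne
          rcases n with _ | n
          · omega
          · exact hp n (by omega) j (by omega) e.symm
    obtain ⟨s1, s2⟩ := numBetween_singleton G (p (n + 1))
    rw [hCC, numBetween_bridge hdisj hadj, numBetween_bridge_root hdisj rfl hadj,
      s1, s2, ih1, ih2, Finset.sum_range_succ]
    constructor <;> ring

/-! ### Copies of a graph, and the total count -/

/-- Counts of connected sets are intrinsic to the induced subgraph. -/
lemma numBetween_image {V W : Type*} {L : SimpleGraph V} {G : SimpleGraph W} (φ : V → W)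
    (hφ : Function.Injective φ) (hadj : ∀ a b, G.Adj (φ a) (φ b) ↔ L.Adj a b) (T : Set V) :
    numBetween G (Set.range φ) (φ '' T) = numBetween L Set.univ T := by
  have hc : ∀ S : Set V, (G.induce (φ '' S)).Connected ↔ (L.induce S).Connected := by
    intro S
    let e : L.induce S ≃g G.induce (φ '' S) :=
      { toEquiv := Equiv.Set.image φ S hφ
        map_rel_iff' := by
          rintro ⟨a, ha⟩ ⟨b, hb⟩
          simp [hadj] }
    exact e.connected_iff.symm
  have : connSets G (Set.range φ) (φ '' T) = (Set.image φ) '' connSets L Set.univ T := by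
    ext S
    constructor
    · rintro ⟨h1, h2, h3⟩
      obtain ⟨S, rfl⟩ := Set.subset_range_iff_exists_image_eq.1 h1
      exact ⟨S, ⟨Set.subset_univ _, (Set.image_subset_image_iff hφ).1 h2, (hc S).1 h3⟩, rfl⟩
    · rintro ⟨S, ⟨h1, h2, h3⟩, rfl⟩
      exact ⟨Set.image_subset_range _ _, Set.image_mono h2, (hc S).2 h3⟩
  rw [numBetween, this, Set.ncard_image_of_injective _ hφ.image_injective, numBetween]

lemma numCIS_eq {V : Type*} (G : SimpleGraph V) : numCIS G = numBetween G Set.univ ∅ := by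
  unfold numCIS numBetween
  rw [Nat.card_coe_set_eq]
  congr 1
  ext S
  simp only [mem_connSets, Set.mem_ofPred_eq, Set.subset_univ, Set.empty_subset, true_and]
  exact ⟨fun h => h.2, fun h => ⟨nonempty_of_connected h, h⟩⟩

/-! ### The graphs `H(k; q)` -/

section Family

variable {VL VR : Type*} {L : SimpleGraph VL} {R : SimpleGraph VR} {u : VL} {v : VR} {k q : ℕ}

lemma hgr_LL (a b : VL) :
    (Hgr L R u v k q).Adj (Sum.inl (Sum.inl a)) (Sum.inl (Sum.inl b)) ↔ L.Adj a b := by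
  simp only [Hgr, SimpleGraph.fromRel_adj, ne_eq, Sum.inl.injEq, L.adj_comm b a, or_self]
  exact ⟨fun h => h.2, fun h => ⟨h.ne, h⟩⟩

lemma hgr_RR (a b : VR) :
    (Hgr L R u v k q).Adj (Sum.inl (Sum.inr a)) (Sum.inl (Sum.inr b)) ↔ R.Adj a b := by
  simp only [Hgr, SimpleGraph.fromRel_adj, ne_eq, Sum.inl.injEq, Sum.inr.injEq, R.adj_comm b a,
    or_self]
  exact ⟨fun h => h.2, fun h => ⟨h.ne, h⟩⟩

lemma hgr_LR (a : VL) (b : VR) :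
    (Hgr L R u v k q).Adj (Sum.inl (Sum.inl a)) (Sum.inl (Sum.inr b)) ↔
      a = u ∧ b = v ∧ q = 2 := by
  simp [Hgr]

lemma hgr_LP (a : VL) (i) :
    (Hgr L R u v k q).Adj (Sum.inl (Sum.inl a)) (Sum.inr (Sum.inl i)) ↔ a = u ∧ i.val = 0 := by
  simp [Hgr]

lemma hgr_LI (a : VL) (i) :
    (Hgr L R u v k q).Adj (Sum.inl (Sum.inl a)) (Sum.inr (Sum.inr i)) ↔ a = u ∧ i.val = 0 := by
  simp [Hgr]

lemma hgr_RP (a : VR) (i) :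
    ¬ (Hgr L R u v k q).Adj (Sum.inr (Sum.inl i)) (Sum.inl (Sum.inr a)) := by
  simp [Hgr]

lemma hgr_IR (a : VR) (i) :
    (Hgr L R u v k q).Adj (Sum.inr (Sum.inr i)) (Sum.inl (Sum.inr a)) ↔
      a = v ∧ i.val + 3 = q := by
  simp [Hgr]

lemma hgr_PP (i j) :
    (Hgr L R u v k q).Adj (Sum.inr (Sum.inl i)) (Sum.inr (Sum.inl j)) ↔
      j.val = i.val + 1 ∨ i.val = j.val + 1 := by
  simp only [Hgr, SimpleGraph.fromRel_adj, ne_eq, Sum.inl.injEq, Sum.inr.injEq, Fin.ext_iff]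
  omega

lemma hgr_PI (i j) :
    ¬ (Hgr L R u v k q).Adj (Sum.inr (Sum.inl i)) (Sum.inr (Sum.inr j)) := by
  simp [Hgr]

lemma hgr_II (i j) :
    (Hgr L R u v k q).Adj (Sum.inr (Sum.inr i)) (Sum.inr (Sum.inr j)) ↔
      j.val = i.val + 1 ∨ i.val = j.val + 1 := by
  simp only [Hgr, SimpleGraph.fromRel_adj, ne_eq, Sum.inr.injEq, Fin.ext_iff]
  omega

/-- The number of connected sets of `H(m + 1; n + 2)`, in terms of the counts of `L` and `R`. -/
lemma numCIS_hgr [Finite VL] [Finite VR] (m n : ℕ) :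
    numCIS (Hgr L R u v (m + 1) (n + 2)) =
      (numBetween L Set.univ ∅ + ∑ i ∈ Finset.range m, (1 + i) + numBetween L Set.univ {u} * m) +
      (numBetween R Set.univ ∅ + ∑ i ∈ Finset.range n, (1 + numBetween R Set.univ {v} + i)) +
      numBetween L Set.univ {u} * (1 + m) * (numBetween R Set.univ {v} + n) := by
  set G := Hgr L R u v (m + 1) (n + 2) with hG
  set ιL : VL → (VL ⊕ VR) ⊕ (Fin (m + 1 - 1) ⊕ Fin (n + 2 - 2)) :=
    fun a => Sum.inl (Sum.inl a) with hιL
  set ιR : VR → (VL ⊕ VR) ⊕ (Fin (m + 1 - 1) ⊕ Fin (n + 2 - 2)) :=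
    fun a => Sum.inl (Sum.inr a) with hιR
  have L0 := numBetween_image (L := L) (G := G) ιL (fun a b h => by simpa [ιL] using h)
    (fun a b => hgr_LL a b)
  have R0 := numBetween_image (L := R) (G := G) ιR (fun a b h => by simpa [ιR] using h)
    (fun a b => hgr_RR a b)
  have L1 := L0 ∅
  have L2 := L0 {u}
  have R1 := R0 ∅
  have R2 := R0 {v}
  rw [Set.image_empty] at L1 R1
  rw [Set.image_singleton] at L2 R2
  -- Both paths are numbered from the end farthest from `u`. The value `p 0` is not used as a root:
  -- the pendant path is grown from the empty set, and `p 0 = u` only fills in the case `m = 0`.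
  obtain ⟨p, hp0, hps⟩ : ∃ p : ℕ → (VL ⊕ VR) ⊕ (Fin (m + 1 - 1) ⊕ Fin (n + 2 - 2)),
      p 0 = ιL u ∧ ∀ i (h : i < m), p (i + 1) = Sum.inr (Sum.inl ⟨m - 1 - i, by omega⟩) :=
    ⟨fun t => if h : 1 ≤ t ∧ t ≤ m then Sum.inr (Sum.inl ⟨m - t, by omega⟩) else ιL u,
      by simp, fun i h => by
        beta_reduce
        rw [dif_pos ⟨by omega, by omega⟩]
        congr 3
        omega⟩
  obtain ⟨r, hr0, hrs⟩ : ∃ r : ℕ → (VL ⊕ VR) ⊕ (Fin (m + 1 - 1) ⊕ Fin (n + 2 - 2)),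
      r 0 = ιR v ∧ ∀ i (h : i < n), r (i + 1) = Sum.inr (Sum.inr ⟨n - 1 - i, by omega⟩) :=
    ⟨fun t => if h : 1 ≤ t ∧ t ≤ n then Sum.inr (Sum.inr ⟨n - t, by omega⟩) else ιR v,
      by simp, fun i h => by
        beta_reduce
        rw [dif_pos ⟨by omega, by omega⟩]
        congr 3
        omega⟩
  obtain ⟨P1, P2⟩ := numBetween_chain (G := G) (B := ∅) p m (by simp) (by simp)
    (fun i hi j hj => by
      rw [hps i hi, hps j (by omega)]
      simp only [ne_eq, Sum.inr.injEq, Sum.inl.injEq, Fin.mk.injEq]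
      omega)
    (fun i hi j hj => by
      rw [hps i hi, hps j (by omega), hG, hgr_PP]
      simp only
      omega)
  obtain ⟨I1, I2⟩ := numBetween_chain (G := G) (B := Set.range ιR) r n
    (fun i hi => by rw [hrs i hi]; simp [ιR])
    (fun i hi => by
      rintro _ ⟨b, rfl⟩
      rw [hrs i hi, hr0, hG, hgr_IR]
      simp only [ιR, Sum.inl.injEq, Sum.inr.injEq]
      rw [and_comm]
      exact and_congr (by omega) Iff.rfl)
    (fun i hi j hj => by
      rw [hrs i hi, hrs j (by omega)]
      simp only [ne_eq, Sum.inr.injEq, Fin.mk.injEq]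
      omega)
    (fun i hi j hj => by
      rw [hrs i hi, hrs j (by omega), hG, hgr_II]
      simp only
      omega)
  have eP : ∅ ∪ (fun i => p (i + 1)) '' Set.Iio m = Set.range fun i => Sum.inr (Sum.inl i) := by
    rw [Set.empty_union]
    ext z
    constructor
    · rintro ⟨i, hi, rfl⟩
      exact ⟨_, (hps i hi).symm⟩
    · rintro ⟨⟨i, hi⟩, rfl⟩
      have hi' : i < m := by omega
      refine ⟨m - 1 - i, by simp only [Set.mem_Iio]; omega, ?_⟩
      simp only
      rw [hps _ (by omega)]
      congr 3
      omega
  have eI : (fun i => r (i + 1)) '' Set.Iio n = Set.range fun i => Sum.inr (Sum.inr i) := by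
    ext z
    constructor
    · rintro ⟨i, hi, rfl⟩
      exact ⟨_, (hrs i hi).symm⟩
    · rintro ⟨⟨i, hi⟩, rfl⟩
      have hi' : i < n := by omega
      refine ⟨n - 1 - i, by simp only [Set.mem_Iio]; omega, ?_⟩
      simp only
      rw [hrs _ (by omega)]
      congr 3
      omega
  rw [eP] at P1 P2
  rw [eI] at I1 I2
  rw [hr0] at I1 I2
  simp only [numBetween_empty, zero_add, add_zero] at P1 P2
  have dLP : Disjoint (Set.range ιL) (Set.range fun i => Sum.inr (Sum.inl i)) := by
    rw [Set.disjoint_left]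
    rintro _ ⟨a, rfl⟩ ⟨i, hi⟩
    simp [ιL] at hi
  have aLP : ∀ a ∈ Set.range ιL, ∀ b ∈ Set.range fun i => Sum.inr (Sum.inl i),
      G.Adj a b ↔ a = ιL u ∧ b = p m := by
    rintro _ ⟨a, rfl⟩ _ ⟨⟨i, hi⟩, rfl⟩
    rw [hG, hgr_LP]
    rcases m with _ | m
    · omega
    · rw [hps m (by omega)]
      simp only [ιL, Sum.inl.injEq, Sum.inr.injEq, Fin.mk.injEq]
      exact and_congr Iff.rfl (by omega)
  have A1 := numBetween_bridge dLP aLP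
  have A2 := numBetween_bridge_root dLP ⟨u, rfl⟩ aLP
  have dAB : Disjoint (Set.range ιL ∪ Set.range fun i => Sum.inr (Sum.inl i))
      (Set.range ιR ∪ Set.range fun i => Sum.inr (Sum.inr i)) := by
    rw [Set.disjoint_left]
    rintro _ (⟨a, rfl⟩ | ⟨i, rfl⟩) (⟨b, hb⟩ | ⟨b, hb⟩) <;> simp [ιL, ιR] at hb
  have aAB : ∀ a ∈ Set.range ιL ∪ Set.range fun i => Sum.inr (Sum.inl i),
      ∀ b ∈ Set.range ιR ∪ Set.range fun i => Sum.inr (Sum.inr i),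
      G.Adj a b ↔ a = ιL u ∧ b = r n := by
    rintro _ (⟨a, rfl⟩ | ⟨i, rfl⟩) _ (⟨b, rfl⟩ | ⟨⟨j, hj⟩, rfl⟩)
    · rw [hG, hgr_LR]
      rcases n with _ | n
      · rw [hr0]; simp [ιL, ιR]
      · rw [hrs n (by omega)]; simp [ιL, ιR]
    · rw [hG, hgr_LI]
      rcases n with _ | n
      · omega
      · rw [hrs n (by omega)]
        simp only [ιL, Sum.inl.injEq, Sum.inr.injEq, Fin.mk.injEq]
        exact and_congr Iff.rfl (by omega)
    · exact iff_of_false (hgr_RP _ _) (by simp [ιL])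
    · exact iff_of_false (hgr_PI _ _) (by simp [ιL])
  have huniv : (Set.univ : Set ((VL ⊕ VR) ⊕ (Fin (m + 1 - 1) ⊕ Fin (n + 2 - 2)))) =
      (Set.range ιL ∪ Set.range fun i => Sum.inr (Sum.inl i)) ∪
      (Set.range ιR ∪ Set.range fun i => Sum.inr (Sum.inr i)) := by
    symm
    rw [Set.eq_univ_iff_forall]
    rintro ((a | a) | (a | a)) <;> simp [ιL, ιR]
  rw [numCIS_eq, huniv, numBetween_bridge dAB aAB, A1, A2, P1, P2, I1, I2, L1, L2, R1, R2]

end Family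

/-! ### Comparing the two counts -/

lemma two_le_rooted {V : Type*} [Fintype V] {L : SimpleGraph V} (hL : L.Connected)
    (h : 1 < Fintype.card V) (u : V) : 2 ≤ numBetween L Set.univ {u} := by
  have hne : ({u} : Set V) ≠ Set.univ := by
    obtain ⟨w, hw⟩ := Fintype.exists_ne_of_one_lt_card h u
    intro e
    have hwu := Set.mem_univ w
    rw [← e] at hwu
    exact hw hwu
  rw [← Set.ncard_pair hne]
  refine Set.ncard_le_ncard ?_
  rintro S (rfl | rfl)
  · exact ⟨Set.subset_univ _, subset_rfl, singleton_connected L u⟩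
  · exact ⟨subset_rfl, Set.subset_univ _, (SimpleGraph.induceUnivIso L).connected_iff.2 hL⟩

lemma sum_range_add_linear (c n m : ℕ) :
    ∑ i ∈ Finset.range (n + m), (1 + c + i) =
      ∑ i ∈ Finset.range n, (1 + c + i) + ∑ i ∈ Finset.range m, (1 + i) + m * (c + n) := by
  induction m with
  | zero => simp
  | succ m ih =>
    rw [← add_assoc, Finset.sum_range_succ, ih, Finset.sum_range_succ]
    ring

theorem stmt_16 {VL VR : Type*} [Fintype VL] [Fintype VR]
    (L : SimpleGraph VL) (R : SimpleGraph VR) (hL : L.Connected) (hR : R.Connected)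
    (hLn : 1 < Fintype.card VL) (hRn : 1 < Fintype.card VR)
    (u : VL) (v : VR) (k q : ℕ) (hk : 1 < k) (hq : 2 ≤ q) :
    numCIS (Hgr L R u v 1 (q + k - 1)) < numCIS (Hgr L R u v k q) := by
  obtain ⟨m, rfl⟩ : ∃ m, k = m + 1 := ⟨k - 1, by omega⟩
  obtain ⟨n, rfl⟩ : ∃ n, q = n + 2 := ⟨q - 2, by omega⟩
  have e : n + 2 + (m + 1) - 1 = n + m + 2 := by omega
  have h1 := numCIS_hgr (L := L) (R := R) (u := u) (v := v) 0 (n + m)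
  rw [zero_add] at h1
  rw [e, h1, numCIS_hgr, sum_range_add_linear]
  have ha := two_le_rooted hL hLn u
  have hb := two_le_rooted hR hRn v
  set a := numBetween L Set.univ {u}
  set b := numBetween R Set.univ {v}
  obtain ⟨c, hc⟩ : ∃ c, a = c + 2 := ⟨a - 2, by omega⟩
  -- the difference of the two sides is `m * (a - 1) * (b + n)`
  have hpos : 0 < m * (c + 1) * (b + n) := by
    have : 0 < m := by omega
    have : 0 < b + n := by omega
    positivity
  rw [hc]
  simp only [Finset.range_zero, Finset.sum_empty]
  nlinarith [hpos]
end

section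
/- Let L and R be two fixed non-trivial (order at least two) vertex disjoint connected graphs with u ∈ V(L) and v ∈ V(R). For an integer k ≥ 2, let H(k; 1) be the graph obtained by taking a path P_k (vertex disjoint from L and R), choosing a leaf w of P_k, and identifying w with both u and v. Then N(H(k; 1)) > N(H(1; k)), where H(1; k) is the graph obtained by identifying u with a leaf of a path P_k and v with the other leaf. -/
/-- `Hmerge L R u v k` is the graph `H(k; 1)`: the leaf `w` of a path `P_k` is identified with
both `u ∈ V(L)` and `v ∈ V(R)`; that is, `u` and `v` are merged (here `v` is removed and its
incidences transferred to `u`) and the path contributes `k - 1` new vertices attached at `u`. -/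
def Hmerge {VL VR : Type*} (L : SimpleGraph VL) (R : SimpleGraph VR) (u : VL) (v : VR)
    (k : ℕ) : SimpleGraph ((VL ⊕ {x : VR // x ≠ v}) ⊕ Fin (k - 1)) :=
  SimpleGraph.fromRel (fun a b =>
    match a, b with
    | Sum.inl (Sum.inl a), Sum.inl (Sum.inl b) => L.Adj a b
    | Sum.inl (Sum.inr a), Sum.inl (Sum.inr b) => R.Adj a.val b.val
    | Sum.inl (Sum.inl a), Sum.inl (Sum.inr b) => a = u ∧ R.Adj v b.val
    | Sum.inl (Sum.inl a), Sum.inr i => a = u ∧ i.val = 0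
    | Sum.inr i, Sum.inr j => j.val = i.val + 1
    | _, _ => False)

namespace SubtreeCount
open SimpleGraph

/-! ### Connected vertex sets and maps -/

/-- A subset of a connected set `S` that is nonempty and closed under adjacency within `S` is all
of `S`. -/
theorem mem_of_closed {V : Type*} {G : SimpleGraph V} {S : Set V}
    (hS : (G.induce S).Connected) (C : Set V)
    (hC : ∀ a ∈ S, ∀ b ∈ S, G.Adj a b → a ∈ C → b ∈ C)
    {x : V} (hx : x ∈ S) (hxC : x ∈ C) {y : V} (hy : y ∈ S) : y ∈ C := by
  obtain ⟨w⟩ := hS.preconnected ⟨x, hx⟩ ⟨y, hy⟩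
  have key : ∀ (a b : S) (_ : (G.induce S).Walk a b), a.1 ∈ C → b.1 ∈ C := by
    intro a b w
    induction w with
    | nil => exact id
    | cons h _ ih => exact fun ha => ih (hC _ (Subtype.prop _) _ (Subtype.prop _) h ha)
  exact key _ _ w hxC

theorem connected_congr {V : Type*} {G : SimpleGraph V} {S T : Set V}
    (h : (G.induce T).Connected) (e : S = T) : (G.induce S).Connected := e ▸ h

/-- Connectedness of a vertex set is preserved by a map that may contract edges. -/
theorem connected_image {V W : Type*} {G : SimpleGraph V} {H : SimpleGraph W} {S : Set V}
    (hS : (G.induce S).Connected) (f : V → W)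
    (hf : ∀ a ∈ S, ∀ b ∈ S, G.Adj a b → f a = f b ∨ H.Adj (f a) (f b)) :
    (H.induce (f '' S)).Connected := by
  obtain ⟨x, hx⟩ := hS.nonempty
  rw [connected_iff_exists_forall_reachable]
  refine ⟨⟨f x, x, hx, rfl⟩, ?_⟩
  rintro ⟨_, y, hy, rfl⟩
  have := mem_of_closed hS {y | ∀ h : f y ∈ f '' S,
    (H.induce (f '' S)).Reachable ⟨f x, x, hx, rfl⟩ ⟨f y, h⟩} ?_ hx ?_ hy
  · exact this _
  · intro a ha b hb hab h h'
    have h1 := h ⟨a, ha, rfl⟩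
    rcases hf a ha b hb hab with e | e
    · simpa only [e] using h1
    · exact h1.trans (Adj.reachable (by simpa using e))
  · intro h
    exact Reachable.refl _

/-- Discrete intermediate value theorem: a bounded integer labelling that rises by at most one along
each edge (in either direction) takes an interval of values on a connected set. -/
theorem exists_image_eq_Icc {V : Type*} {G : SimpleGraph V} {S : Set V}
    (hS : (G.induce S).Connected) (f : V → ℕ) (hf : ∀ a b, G.Adj a b → f b ≤ f a + 1)
    (M : ℕ) (hM : ∀ a, f a ≤ M) :
    ∃ a b, a ≤ b ∧ b ≤ M ∧ f '' S = Set.Icc a b := by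
  obtain ⟨x, hx⟩ := hS.nonempty
  have hne : (f '' S).Nonempty := ⟨f x, x, hx, rfl⟩
  have hbd : BddAbove (f '' S) := ⟨M, by rintro _ ⟨a, -, rfl⟩; exact hM a⟩
  obtain ⟨xa, hxa, ea⟩ := Nat.sInf_mem hne
  obtain ⟨xb, hxb, eb⟩ := Nat.sSup_mem hne hbd
  refine ⟨sInf (f '' S), sSup (f '' S), ?_, ?_, ?_⟩
  · exact Nat.sInf_le (Nat.sSup_mem hne hbd)
  · rw [← eb]; exact hM _
  · ext c
    refine ⟨fun h => ⟨Nat.sInf_le h, le_csSup hbd h⟩, fun ⟨h1, h2⟩ => ?_⟩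
    by_contra hc
    have hc' : ∀ y ∈ S, f y ≠ c := fun y hy e => hc ⟨y, hy, e⟩
    have h3 := hc' _ hxa
    have := mem_of_closed hS {y | f y < c} (fun a ha b hb hab hac => by
      have := hf a b hab
      have := hc' b hb
      simp only [Set.mem_ofPred_eq] at *
      omega) hxa (by simp only [Set.mem_ofPred_eq]; omega) hxb
    simp only [Set.mem_ofPred_eq] at this
    omega

/-- A stretch of a walk, given as a sequence of successively adjacent vertices, spans a connected
set. -/
theorem connected_image_Icc {W : Type*} {H : SimpleGraph W} (q : ℕ → W) (a b : ℕ) (hab : a ≤ b)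
    (hq : ∀ n, n < b → H.Adj (q n) (q (n + 1))) :
    (H.induce (q '' Set.Icc a b)).Connected := by
  induction b, hab using Nat.le_induction with
  | base =>
    rw [Set.Icc_self, Set.image_singleton]
    exact (connected_iff _).2 ⟨Preconnected.of_subsingleton, ⟨⟨q a, rfl⟩⟩⟩
  | succ b hab ih =>
    have e : q '' Set.Icc a (b + 1) = q '' Set.Icc a b ∪ {q b, q (b + 1)} := by
      rw [← Set.image_pair, ← Set.image_union]
      congr 1
      ext c
      simp only [Set.mem_Icc, Set.mem_union, Set.mem_insert_iff, Set.mem_singleton_iff]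
      omega
    rw [e]
    exact induce_union_connected (ih fun n hn => hq n (by omega)).preconnected
      (induce_pair_connected_of_adj (hq b (by omega))).preconnected ⟨q b, ⟨b, ⟨hab, le_rfl⟩, rfl⟩, by simp⟩


/-! ### Counting the pieces -/

/-- The connected vertex sets of `G` that contain `u`. -/
def cisWith {V : Type*} (G : SimpleGraph V) (u : V) : Set (Set V) :=
  {S | u ∈ S ∧ (G.induce S).Connected}

/-- The connected (hence nonempty) vertex sets of `G` that avoid `u`. -/
def cisWithout {V : Type*} (G : SimpleGraph V) (u : V) : Set (Set V) :=
  {S | u ∉ S ∧ (G.induce S).Connected}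

/-- The nonempty intervals in `{0, …, n - 1}`, encoded by the right endpoint `j` together with the
left endpoint `i ≤ j`. -/
abbrev Intervals (n : ℕ) : Type := Σ j : Fin n, Fin (j.val + 1)

theorem card_intervals_succ (n : ℕ) :
    Nat.card (Intervals (n + 1)) = Nat.card (Intervals n) + (n + 1) := by
  simp only [Intervals, Nat.card_sigma, Nat.card_fin]
  rw [Fin.sum_univ_castSucc]
  simp

theorem two_le_card_cisWith {V : Type*} [Fintype V] {G : SimpleGraph V} (hG : G.Connected)
    (hn : 1 < Fintype.card V) (u : V) : 2 ≤ Nat.card (cisWith G u) := by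
  rw [Nat.card_coe_set_eq]
  refine (Set.one_lt_ncard (Set.toFinite _)).2 ⟨{u}, ⟨rfl, ?_⟩, Set.univ, ⟨trivial, ?_⟩, ?_⟩
  · exact (connected_iff _).2 ⟨Preconnected.of_subsingleton, ⟨⟨u, rfl⟩⟩⟩
  · exact (induceUnivIso G).connected_iff.2 hG
  · intro h
    have := Fintype.one_lt_card_iff_nontrivial.1 hn
    obtain ⟨w, hw⟩ := exists_ne u
    exact hw (h ▸ Set.mem_univ w : w ∈ ({u} : Set V))

/-! ### Upper bound for `H(1; k)` -/

section Separated
variable {VL VR : Type*} (L : SimpleGraph VL) (R : SimpleGraph VR) (u : VL) (v : VR) (m : ℕ)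

/-- The vertex set of `H(1; m + 2)` with trace `X` on `L`, trace `Y` on `R`, and containing the
internal path vertices whose position lies in `Z`. Positions along the path are numbered from `u` at
`0` to `v` at `m + 1`, so that the internal vertex `i` is at position `i + 1`. -/
def buildSep (X : Set VL) (Y : Set VR) (Z : Set ℕ) :
    Set ((VL ⊕ VR) ⊕ (Fin (1 - 1) ⊕ Fin (m + 2 - 2))) :=
  {x | match x with
    | Sum.inl (Sum.inl a) => a ∈ X
    | Sum.inl (Sum.inr b) => b ∈ Y
    | Sum.inr (Sum.inl _) => False
    | Sum.inr (Sum.inr i) => i.val + 1 ∈ Z}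

/-- The position along the path, with all of `L` collapsed to the position `0` of `u` and all of `R`
to the position `m + 1` of `v`. The summand `Fin (1 - 1)` is empty, so its value is irrelevant. -/
def posSep : (VL ⊕ VR) ⊕ (Fin (1 - 1) ⊕ Fin (m + 2 - 2)) → ℕ
  | Sum.inl (Sum.inl _) => 0
  | Sum.inl (Sum.inr _) => m + 1
  | Sum.inr (Sum.inl _) => 0
  | Sum.inr (Sum.inr i) => i.val + 1

/-- The retraction of `H(1; m + 2)` onto `L` that contracts everything else to `u`. -/
def retrL : (VL ⊕ VR) ⊕ (Fin (1 - 1) ⊕ Fin (m + 2 - 2)) → VL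
  | Sum.inl (Sum.inl a) => a
  | _ => u

/-- The retraction of `H(1; m + 2)` onto `R` that contracts everything else to `v`. -/
def retrR : (VL ⊕ VR) ⊕ (Fin (1 - 1) ⊕ Fin (m + 2 - 2)) → VR
  | Sum.inl (Sum.inr b) => b
  | _ => v

theorem posSep_le (a : (VL ⊕ VR) ⊕ (Fin (1 - 1) ⊕ Fin (m + 2 - 2))) : posSep m a ≤ m + 1 := by
  rcases a with (a | a) | (a | a) <;> simp only [posSep] <;> omega

theorem posSep_adj (a b) (h : (Hgr L R u v 1 (m + 2)).Adj a b) :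
    posSep m b ≤ posSep m a + 1 := by
  rcases a with (a | a) | (a | a) <;> rcases b with (b | b) | (b | b) <;>
    simp [Hgr, posSep] at h ⊢ <;> omega

theorem retrL_adj (a b) (h : (Hgr L R u v 1 (m + 2)).Adj a b) :
    retrL u m a = retrL u m b ∨ L.Adj (retrL u m a) (retrL u m b) := by
  rcases a with (a | a) | (a | a) <;> rcases b with (b | b) | (b | b) <;>
    simp [Hgr, retrL, L.adj_comm] at h ⊢ <;> grind [L.adj_comm]

theorem retrR_adj (a b) (h : (Hgr L R u v 1 (m + 2)).Adj a b) :
    retrR v m a = retrR v m b ∨ R.Adj (retrR v m a) (retrR v m b) := by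
  rcases a with (a | a) | (a | a) <;> rcases b with (b | b) | (b | b) <;>
    simp [Hgr, retrR, R.adj_comm] at h ⊢ <;> grind [R.adj_comm]

/-- Since `u` separates `L` from the rest, a connected set that avoids `u` and meets `L` stays in
`L`. -/
theorem subset_L {S} (hS : ((Hgr L R u v 1 (m + 2)).induce S).Connected)
    (hu : Sum.inl (Sum.inl u) ∉ S) {a} (ha : Sum.inl (Sum.inl a) ∈ S) {y} (hy : y ∈ S) :
    ∃ b, y = Sum.inl (Sum.inl b) := by
  refine mem_of_closed hS {y | ∃ b, y = Sum.inl (Sum.inl b)} ?_ ha ⟨a, rfl⟩ hy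
  rintro a ha b hb h ⟨c, rfl⟩
  rcases b with (b | b) | (b | b) <;> simp [Hgr] at h ⊢ <;> grind

/-- Since `v` separates `R` from the rest, a connected set that avoids `v` and meets `R` stays in
`R`. -/
theorem subset_R {S} (hS : ((Hgr L R u v 1 (m + 2)).induce S).Connected)
    (hv : Sum.inl (Sum.inr v) ∉ S) {a} (ha : Sum.inl (Sum.inr a) ∈ S) {y} (hy : y ∈ S) :
    ∃ b, y = Sum.inl (Sum.inr b) := by
  refine mem_of_closed hS {y | ∃ b, y = Sum.inl (Sum.inr b)} ?_ ha ⟨a, rfl⟩ hy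
  rintro a ha b hb h ⟨c, rfl⟩
  rcases b with (b | b) | (b | b) <;> simp [Hgr] at h ⊢ <;> grind

theorem connected_traceL {S} (hS : ((Hgr L R u v 1 (m + 2)).induce S).Connected)
    {a} (ha : Sum.inl (Sum.inl a) ∈ S) :
    (L.induce {a | Sum.inl (Sum.inl a) ∈ S}).Connected := by
  have h := connected_image hS (retrL u m) (H := L) fun a _ b _ => retrL_adj L R u v m a b
  refine connected_congr h ?_
  ext c
  simp only [Set.mem_image, Set.mem_ofPred_eq]
  refine ⟨fun h => ⟨_, h, rfl⟩, ?_⟩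
  rintro ⟨y, hy, rfl⟩
  by_cases hu : Sum.inl (Sum.inl u) ∈ S
  · rcases y with (y | y) | y <;> first | exact hy | exact hu
  · obtain ⟨b, rfl⟩ := subset_L L R u v m hS hu ha hy
    exact hy

theorem connected_traceR {S} (hS : ((Hgr L R u v 1 (m + 2)).induce S).Connected)
    {a} (ha : Sum.inl (Sum.inr a) ∈ S) :
    (R.induce {a | Sum.inl (Sum.inr a) ∈ S}).Connected := by
  have h := connected_image hS (retrR v m) (H := R) fun a _ b _ => retrR_adj L R u v m a b
  refine connected_congr h ?_
  ext c
  simp only [Set.mem_image, Set.mem_ofPred_eq]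
  refine ⟨fun h => ⟨_, h, rfl⟩, ?_⟩
  rintro ⟨y, hy, rfl⟩
  by_cases hv : Sum.inl (Sum.inr v) ∈ S
  · rcases y with (y | y) | y <;> first | exact hy | exact hv
  · obtain ⟨b, rfl⟩ := subset_R L R u v m hS hv ha hy
    exact hy

/-- The data describing a connected set of `H(1; m + 2)`: a connected set of `L - u`, one of `R - v`,
an interval of internal path vertices, a connected set of `L` through `u` with an initial segment of
the path short of `v`, a connected set of `R` through `v` with a final segment of the path short of
`u`, or a connected set of `L` through `u` with one of `R` through `v`, joined by the whole path. -/
abbrev CodeSep : Type _ :=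
  cisWithout L u ⊕ cisWithout R v ⊕ Intervals m ⊕ (cisWith L u × Fin (m + 1)) ⊕
    (cisWith R v × Fin (m + 1)) ⊕ (cisWith L u × cisWith R v)

/-- The vertex set of `H(1; m + 2)` described by a `CodeSep`. -/
def decodeSep : CodeSep L R u v m → Set ((VL ⊕ VR) ⊕ (Fin (1 - 1) ⊕ Fin (m + 2 - 2)))
  | .inl X => buildSep m X ∅ ∅
  | .inr (.inl Y) => buildSep m ∅ Y ∅
  | .inr (.inr (.inl p)) => buildSep m ∅ ∅ (Set.Icc (p.2.val + 1) (p.1.val + 1))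
  | .inr (.inr (.inr (.inl p))) => buildSep m p.1 ∅ (Set.Iic p.2.val)
  | .inr (.inr (.inr (.inr (.inl p)))) => buildSep m ∅ p.1 (Set.Ici (p.2.val + 1))
  | .inr (.inr (.inr (.inr (.inr p)))) => buildSep m p.1 p.2 Set.univ

theorem exists_decodeSep {S} (hS : ((Hgr L R u v 1 (m + 2)).induce S).Connected) :
    ∃ t, decodeSep L R u v m t = S := by
  obtain ⟨s, t, hst, htm, hpos⟩ :=
    exists_image_eq_Icc hS (posSep m) (posSep_adj L R u v m) (m + 1) (posSep_le m)
  have hpath : ∀ i, Sum.inr (Sum.inr i) ∈ S ↔ s ≤ i.val + 1 ∧ i.val + 1 ≤ t := by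
    intro i
    rw [← Set.mem_Icc, ← hpos]
    refine ⟨fun h => ⟨_, h, rfl⟩, ?_⟩
    rintro ⟨y, hy, e⟩
    rcases y with (y | y) | (y | y) <;> simp only [posSep] at e
    · omega
    · omega
    · exact y.elim0
    · obtain rfl : y = i := Fin.ext (by omega)
      exact hy
  have hposL : ∀ a, Sum.inl (Sum.inl a) ∈ S → s = 0 := fun a ha => by
    have : (0 : ℕ) ∈ Set.Icc s t := hpos ▸ ⟨_, ha, rfl⟩
    simpa using this.1
  have hposR : ∀ b, Sum.inl (Sum.inr b) ∈ S → t = m + 1 := fun a ha => by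
    have : m + 1 ∈ Set.Icc s t := hpos ▸ ⟨_, ha, rfl⟩
    have := this.2
    omega
  -- The traces of `S` on `L` and `R` and the interval `[s, t]` of positions determine `S`.
  have ext' : ∀ {X : Set VL} {Y : Set VR} {Z : Set ℕ},
      (∀ a, a ∈ X ↔ Sum.inl (Sum.inl a) ∈ S) → (∀ b, b ∈ Y ↔ Sum.inl (Sum.inr b) ∈ S) →
      (∀ i < m, i + 1 ∈ Z ↔ s ≤ i + 1 ∧ i + 1 ≤ t) → buildSep m X Y Z = S := by
    intro X Y Z hX hY hZ
    ext y
    rcases y with (y | y) | (y | y)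
    · exact hX y
    · exact hY y
    · exact y.elim0
    · rw [hpath]
      exact hZ y (by omega)
  have hL0 : Sum.inl (Sum.inl u) ∉ S → Sum.inl (Sum.inr v) ∈ S →
      ∀ a, Sum.inl (Sum.inl a) ∉ S := by
    intro hu hv a ha
    obtain ⟨b, hb⟩ := subset_L L R u v m hS hu ha hv
    cases hb
  have hR0 : Sum.inl (Sum.inr v) ∉ S → Sum.inl (Sum.inl u) ∈ S →
      ∀ a, Sum.inl (Sum.inr a) ∉ S := by
    intro hu hv a ha
    obtain ⟨b, hb⟩ := subset_R L R u v m hS hu ha hv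
    cases hb
  have hs : s = 0 → ∃ a, Sum.inl (Sum.inl a) ∈ S := by
    rintro rfl
    obtain ⟨y, hy, e⟩ : 0 ∈ posSep m '' S := hpos ▸ ⟨le_rfl, hst⟩
    rcases y with (y | y) | (y | y) <;> simp only [posSep] at e
    · exact ⟨y, hy⟩
    · omega
    · exact y.elim0
    · omega
  have ht : t = m + 1 → ∃ a, Sum.inl (Sum.inr a) ∈ S := by
    rintro rfl
    obtain ⟨y, hy, e⟩ : m + 1 ∈ posSep m '' S := hpos ▸ ⟨hst, le_rfl⟩
    rcases y with (y | y) | (y | y) <;> simp only [posSep] at e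
    · omega
    · exact ⟨y, hy⟩
    · omega
    · omega
  by_cases hu : Sum.inl (Sum.inl u) ∈ S
  · have hs0 := hposL _ hu
    by_cases hv : Sum.inl (Sum.inr v) ∈ S
    · have ht0 := hposR _ hv
      refine ⟨.inr (.inr (.inr (.inr (.inr (⟨_, hu, connected_traceL L R u v m hS hu⟩,
        ⟨_, hv, connected_traceR L R u v m hS hv⟩))))), ext' (fun _ => Iff.rfl)
        (fun _ => Iff.rfl) fun i hi => ?_⟩
      simp only [Set.mem_univ, true_iff]
      omega
    · have htm' : t ≠ m + 1 := fun h => (ht h).elim (hR0 hv hu)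
      refine ⟨.inr (.inr (.inr (.inl (⟨_, hu, connected_traceL L R u v m hS hu⟩,
        ⟨t, by omega⟩)))), ext' (fun _ => Iff.rfl)
        (fun b => iff_of_false id (hR0 hv hu b)) fun i hi => ?_⟩
      simp only [Set.mem_Iic]
      omega
  · by_cases hv : Sum.inl (Sum.inr v) ∈ S
    · have ht0 := hposR _ hv
      have hs0 : s ≠ 0 := fun h => (hs h).elim (hL0 hu hv)
      refine ⟨.inr (.inr (.inr (.inr (.inl (⟨_, hv, connected_traceR L R u v m hS hv⟩,
        ⟨s - 1, by omega⟩))))), ext' (fun b => iff_of_false id (hL0 hu hv b))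
        (fun _ => Iff.rfl) fun i hi => ?_⟩
      simp only [Set.mem_Ici]
      omega
    · by_cases hA : ∃ a, Sum.inl (Sum.inl a) ∈ S
      · obtain ⟨a, ha⟩ := hA
        have hsub := fun {y} => subset_L L R u v m hS hu ha (y := y)
        refine ⟨.inl ⟨_, hu, connected_traceL L R u v m hS ha⟩, ext' (fun _ => Iff.rfl)
          (fun b => iff_of_false id fun h => ?_) fun i hi => iff_of_false id fun h => ?_⟩
        · obtain ⟨b, hb⟩ := hsub h
          cases hb
        · obtain ⟨b, hb⟩ := hsub ((hpath ⟨i, hi⟩).2 h)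
          cases hb
      · by_cases hB : ∃ a, Sum.inl (Sum.inr a) ∈ S
        · obtain ⟨a, ha⟩ := hB
          have hsub := fun {y} => subset_R L R u v m hS hv ha (y := y)
          refine ⟨.inr (.inl ⟨_, hv, connected_traceR L R u v m hS ha⟩),
            ext' (fun b => iff_of_false id fun h => ?_) (fun _ => Iff.rfl)
            fun i hi => iff_of_false id fun h => ?_⟩
          · obtain ⟨b, hb⟩ := hsub h
            cases hb
          · obtain ⟨b, hb⟩ := hsub ((hpath ⟨i, hi⟩).2 h)
            cases hb
        · have hs0 : s ≠ 0 := fun h => hA (hs h)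
          have ht0 : t ≠ m + 1 := fun h => hB (ht h)
          refine ⟨.inr (.inr (.inl ⟨⟨t - 1, by omega⟩, ⟨s - 1, by simp only; omega⟩⟩)),
            ext' (fun b => iff_of_false id fun h => hA ⟨_, h⟩)
            (fun b => iff_of_false id fun h => hB ⟨_, h⟩) fun i hi => ?_⟩
          simp only [Set.mem_Icc]
          omega

theorem numCIS_sep_le [Fintype VL] [Fintype VR] :
    numCIS (Hgr L R u v 1 (m + 2)) ≤
      Nat.card (cisWithout L u) + Nat.card (cisWithout R v) + Nat.card (Intervals m) +
      Nat.card (cisWith L u) * (m + 1) + Nat.card (cisWith R v) * (m + 1) +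
      Nat.card (cisWith L u) * Nat.card (cisWith R v) := by
  choose f hf using fun S : {S : Set _ | S.Nonempty ∧
    ((Hgr L R u v 1 (m + 2)).induce S).Connected} => exists_decodeSep L R u v m S.2.2
  have hinj : Function.Injective f := fun S T h => Subtype.ext (by rw [← hf S, ← hf T, h])
  refine (Nat.card_le_card_of_injective f hinj).trans (le_of_eq ?_)
  simp only [CodeSep, Nat.card_sum, Nat.card_prod, Nat.card_fin]
  ring

end Separated

/-! ### Lower bound for `H(k; 1)` -/

section Merged
variable {VL VR : Type*} (L : SimpleGraph VL) (R : SimpleGraph VR) (u : VL) (v : VR) (m : ℕ)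

/-- The vertex set of `H(m + 2; 1)` with trace `X` on `L`, trace `Y` on `R - v`, and containing the
path vertices whose position lies in `Z`. The merged vertex is at position `0`, so that the path
vertex `i` is at position `i + 1`; membership of the merged vertex is governed by `X` alone. -/
def buildMerge (X : Set VL) (Y : Set VR) (Z : Set ℕ) :
    Set ((VL ⊕ {x : VR // x ≠ v}) ⊕ Fin (m + 2 - 1)) :=
  {x | match x with
    | Sum.inl (Sum.inl a) => a ∈ X
    | Sum.inl (Sum.inr b) => b.val ∈ Y
    | Sum.inr i => i.val + 1 ∈ Z}

open Classical in
/-- The inclusion of `R` into `H(m + 2; 1)`, sending `v` to the merged vertex. -/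
noncomputable def embR (b : VR) : (VL ⊕ {x : VR // x ≠ v}) ⊕ Fin (m + 2 - 1) :=
  if h : b = v then Sum.inl (Sum.inl u) else Sum.inl (Sum.inr ⟨b, h⟩)

/-- The path vertices of `H(m + 2; 1)` in order, starting from the merged vertex at position `0`.
Positions beyond `m + 1` do not occur on the path and are sent to the merged vertex. -/
def embPath : ℕ → (VL ⊕ {x : VR // x ≠ v}) ⊕ Fin (m + 2 - 1)
  | 0 => Sum.inl (Sum.inl u)
  | n + 1 => if h : n < m + 2 - 1 then Sum.inr ⟨n, h⟩ else Sum.inl (Sum.inl u)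

theorem connected_embL {X : Set VL} (hX : (L.induce X).Connected) :
    ((Hmerge L R u v (m + 2)).induce ((fun a => Sum.inl (Sum.inl a)) '' X)).Connected := by
  refine connected_image hX _ fun a _ b _ h => Or.inr ?_
  simp [Hmerge, h, h.ne]

theorem connected_embR {Y : Set VR} (hY : (R.induce Y).Connected) :
    ((Hmerge L R u v (m + 2)).induce (embR u v m '' Y)).Connected := by
  refine connected_image hY _ fun a _ b _ h => ?_
  by_cases ha : a = v <;> by_cases hb : b = v
  · exact Or.inl (by rw [ha, hb])
  · subst ha; simp [Hmerge, embR, hb, h]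
  · subst hb; simp [Hmerge, embR, ha, h.symm]
  · simp [Hmerge, embR, ha, hb, h, h.ne]

theorem connected_embPath {a b : ℕ} (hab : a ≤ b) (hb : b ≤ m + 1) :
    ((Hmerge L R u v (m + 2)).induce (embPath u v m '' Set.Icc a b)).Connected := by
  refine connected_image_Icc _ a b hab fun n hn => ?_
  have h1 : n < m + 2 - 1 := by omega
  rcases n with _ | n
  · simp [Hmerge, embPath]
  · have h2 : n < m + 2 - 1 := by omega
    simp only [embPath, h1, h2, dif_pos]
    simp [Hmerge]

theorem mem_path_inl {a b : ℕ} {x} (hb : b ≤ m + 1) :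
    Sum.inl x ∈ embPath (VL := VL) u v m '' Set.Icc a b ↔ x = Sum.inl u ∧ a = 0 := by
  constructor
  · rintro ⟨n, ⟨h1, h2⟩, e⟩
    rcases n with _ | n
    · exact ⟨(Sum.inl_injective e).symm, by omega⟩
    · have h : n < m + 2 - 1 := by omega
      rw [embPath, dif_pos h] at e
      cases e
  · rintro ⟨rfl, rfl⟩
    exact ⟨0, by simp, rfl⟩

theorem mem_path_inr {a b : ℕ} {i} :
    Sum.inr i ∈ embPath (VL := VL) u v m '' Set.Icc a b ↔ i.val + 1 ∈ Set.Icc a b := by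
  constructor
  · rintro ⟨n, h, e⟩
    rcases n with _ | n
    · cases e
    · by_cases h' : n < m + 2 - 1
      · rw [embPath, dif_pos h'] at e
        cases e
        exact h
      · rw [embPath, dif_neg h'] at e
        cases e
  · intro h
    exact ⟨_, h, dif_pos i.2⟩

theorem mem_embR_inl_inl {Y : Set VR} {a} :
    Sum.inl (Sum.inl a) ∈ embR u v m '' Y ↔ a = u ∧ v ∈ Y := by
  constructor
  · rintro ⟨y, hy, e⟩
    by_cases h : y = v
    · subst h
      rw [embR, dif_pos rfl] at e
      cases e
      exact ⟨rfl, hy⟩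
    · rw [embR, dif_neg h] at e
      cases e
  · rintro ⟨rfl, hv⟩
    exact ⟨v, hv, dif_pos rfl⟩

theorem mem_embR_inl_inr {Y : Set VR} {b} :
    Sum.inl (Sum.inr b) ∈ embR u v m '' Y ↔ b.val ∈ Y := by
  constructor
  · rintro ⟨y, hy, e⟩
    by_cases h : y = v
    · rw [embR, dif_pos h] at e
      cases e
    · rw [embR, dif_neg h] at e
      cases e
      exact hy
  · exact fun h => ⟨b, h, dif_neg b.2⟩

theorem mem_embR_inr {Y : Set VR} {i} : Sum.inr i ∉ embR u v m '' Y := by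
  rintro ⟨y, -, e⟩
  by_cases h : y = v
  · rw [embR, dif_pos h] at e
    cases e
  · rw [embR, dif_neg h] at e
    cases e

/-- The data describing a connected set of `H(m + 2; 1)`: a connected set of `L - u`, one of `R - v`,
an interval of path vertices other than the merged one, or connected sets of `L` through `u` and of
`R` through `v` with an initial segment of the path. -/
abbrev CodeMerge : Type _ :=
  cisWithout L u ⊕ cisWithout R v ⊕ Intervals (m + 1) ⊕
    (cisWith L u × cisWith R v × Fin (m + 2))

/-- The vertex set of `H(m + 2; 1)` described by a `CodeMerge`. -/
def decodeMerge : CodeMerge L R u v m → Set ((VL ⊕ {x : VR // x ≠ v}) ⊕ Fin (m + 2 - 1))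
  | .inl X => buildMerge v m X ∅ ∅
  | .inr (.inl Y) => buildMerge v m ∅ Y ∅
  | .inr (.inr (.inl p)) => buildMerge v m ∅ ∅ (Set.Icc (p.2.val + 1) (p.1.val + 1))
  | .inr (.inr (.inr p)) => buildMerge v m p.1 p.2.1 (Set.Iic p.2.2.val)

theorem decodeMerge_connected (t : CodeMerge L R u v m) :
    ((Hmerge L R u v (m + 2)).induce (decodeMerge L R u v m t)).Connected := by
  rcases t with ⟨X, hu, hX⟩ | ⟨Y, hv, hY⟩ | ⟨j, i⟩ | ⟨⟨X, hu, hX⟩, ⟨Y, hv, hY⟩, t⟩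
  · refine connected_congr (connected_embL L R u v m hX) ?_
    ext ((a | b) | i) <;> simp [decodeMerge, buildMerge]
  · refine connected_congr (connected_embR L R u v m hY) ?_
    ext ((a | b) | i)
    · rw [mem_embR_inl_inl]
      exact iff_of_false id fun h => hv h.2
    · rw [mem_embR_inl_inr]
      exact Iff.rfl
    · exact iff_of_false id (mem_embR_inr u v m)
  · refine connected_congr (connected_embPath L R u v m (a := i.val + 1) (b := j.val + 1)
      (by omega) (by omega)) ?_
    ext (x | n)
    · rw [mem_path_inl u v m (by omega)]
      rcases x with a | b <;> exact iff_of_false id fun h => absurd h.2 (by omega)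
    · rw [mem_path_inr]
      exact Iff.rfl
  · have h1 := induce_union_connected (connected_embL L R u v m hX).preconnected
      (connected_embR L R u v m hY).preconnected
      ⟨Sum.inl (Sum.inl u), ⟨u, hu, rfl⟩, v, hv, by simp [embR]⟩
    have h2 := induce_union_connected h1.preconnected
      (connected_embPath L R u v m (Nat.zero_le t.val) (by omega)).preconnected
      ⟨Sum.inl (Sum.inl u), Or.inl ⟨u, hu, rfl⟩, 0, by simp, rfl⟩
    refine connected_congr h2 ?_
    ext ((a | b) | n)
    · rw [Set.mem_union, Set.mem_union, mem_path_inl u v m (by omega), mem_embR_inl_inl]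
      simp only [decodeMerge, buildMerge, Set.mem_ofPred_eq, Set.mem_image]
      grind
    · rw [Set.mem_union, Set.mem_union, mem_path_inl u v m (by omega), mem_embR_inl_inr]
      simp [decodeMerge, buildMerge]
    · rw [Set.mem_union, Set.mem_union, mem_path_inr]
      refine ⟨fun h => Or.inr ⟨Nat.zero_le _, h⟩, ?_⟩
      rintro ((⟨_, -, e⟩ | h) | h)
      · cases e
      · exact (mem_embR_inr u v m h).elim
      · exact h.2

theorem decodeMerge_injective : Function.Injective (decodeMerge L R u v m) := by
  have hset : ∀ {X X' : Set VL} {Y Y' : Set VR} {Z Z' : Set ℕ},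
      buildMerge v m X Y Z = buildMerge v m X' Y' Z' →
      X = X' ∧ (∀ b, b ≠ v → (b ∈ Y ↔ b ∈ Y')) ∧ ∀ i < m + 1, i + 1 ∈ Z ↔ i + 1 ∈ Z' := by
    intro X X' Y Y' Z Z' h
    rw [Set.ext_iff] at h
    exact ⟨Set.ext fun a => h (Sum.inl (Sum.inl a)), fun b hb => h (Sum.inl (Sum.inr ⟨b, hb⟩)),
      fun i hi => h (Sum.inr ⟨i, hi⟩)⟩
  have hne : ∀ {X : Set VL}, (L.induce X).Connected → X ≠ ∅ := fun hX =>
    (Set.nonempty_coe_sort.1 hX.nonempty).ne_empty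
  rintro (⟨X, hu, hX⟩ | ⟨Y, hv, hY⟩ | ⟨j, i⟩ | ⟨⟨X, hu, hX⟩, ⟨Y, hv, hY⟩, t⟩)
    (⟨X', hu', hX'⟩ | ⟨Y', hv', hY'⟩ | ⟨j', i'⟩ | ⟨⟨X', hu', hX'⟩, ⟨Y', hv', hY'⟩, t'⟩) h <;>
    obtain ⟨h1, h2, h3⟩ := hset h
  · subst h1
    rfl
  · exact (hne hX h1).elim
  · exact (hne hX h1).elim
  · exact (hu ((Set.ext_iff.1 h1 u).2 hu')).elim
  · exact (hne hX' h1.symm).elim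
  · obtain rfl : Y = Y' := Set.ext fun b => by
      by_cases hb : b = v
      · rw [hb]
        exact iff_of_false hv hv'
      · exact h2 b hb
    rfl
  · exact ((h3 j' j'.2).2 ⟨Nat.succ_le_succ (Nat.lt_succ_iff.1 i'.2), le_rfl⟩).elim
  · exact (h1 ▸ hu' : u ∈ (∅ : Set VL)).elim
  · exact (hne hX' h1.symm).elim
  · exact ((h3 j j.2).1 ⟨Nat.succ_le_succ (Nat.lt_succ_iff.1 i.2), le_rfl⟩).elim
  · have e1 := h3 j j.2
    have e2 := h3 j' j'.2
    have e3 := h3 i (by omega)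
    have e4 := h3 i' (by omega)
    -- The membership of the four endpoints identifies the two intervals.
    simp only [Set.mem_Icc] at e1 e2 e3 e4
    obtain rfl : j = j' := Fin.ext (by omega)
    obtain rfl : i = i' := Fin.ext (by omega)
    rfl
  · exact (h1 ▸ hu' : u ∈ (∅ : Set VL)).elim
  · exact (hu' ((Set.ext_iff.1 h1 u).1 hu)).elim
  · exact (h1 ▸ hu : u ∈ (∅ : Set VL)).elim
  · exact (h1 ▸ hu : u ∈ (∅ : Set VL)).elim
  · subst h1
    obtain rfl : Y = Y' := Set.ext fun b => by
      by_cases hb : b = v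
      · rw [hb]
        exact iff_of_true hv hv'
      · exact h2 b hb
    have e1 : t.val < m + 1 → _ := h3 t
    have e2 : t'.val < m + 1 → _ := h3 t'
    simp only [Set.mem_Iic] at e1 e2
    obtain rfl : t = t' := Fin.ext (by omega)
    rfl

theorem le_numCIS_merge [Fintype VL] [Fintype VR] :
    Nat.card (cisWithout L u) + Nat.card (cisWithout R v) + Nat.card (Intervals (m + 1)) +
      Nat.card (cisWith L u) * Nat.card (cisWith R v) * (m + 2) ≤
    numCIS (Hmerge L R u v (m + 2)) := by
  have := Nat.card_le_card_of_injective
    (fun t => (⟨decodeMerge L R u v m t, Set.nonempty_coe_sort.1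
      (decodeMerge_connected L R u v m t).nonempty, decodeMerge_connected L R u v m t⟩ :
      {S : Set _ | S.Nonempty ∧ ((Hmerge L R u v (m + 2)).induce S).Connected}))
    fun s t h => decodeMerge_injective L R u v m (congrArg Subtype.val h)
  refine (le_of_eq ?_).trans this
  simp only [CodeMerge, Nat.card_sum, Nat.card_prod, Nat.card_fin]
  ring

end Merged
end SubtreeCount

theorem stmt_17 {VL VR : Type*} [Fintype VL] [Fintype VR]
    (L : SimpleGraph VL) (R : SimpleGraph VR) (hL : L.Connected) (hR : R.Connected)
    (hLn : 1 < Fintype.card VL) (hRn : 1 < Fintype.card VR)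
    (u : VL) (v : VR) (k : ℕ) (hk : 2 ≤ k) :
    numCIS (Hgr L R u v 1 k) < numCIS (Hmerge L R u v k) := by
  obtain ⟨m, rfl⟩ := Nat.exists_eq_add_of_le' hk
  refine (SubtreeCount.numCIS_sep_le L R u v m).trans_lt
    (lt_of_lt_of_le ?_ (SubtreeCount.le_numCIS_merge L R u v m))
  rw [SubtreeCount.card_intervals_succ]
  obtain ⟨a, ha⟩ := Nat.exists_eq_add_of_le (SubtreeCount.two_le_card_cisWith hL hLn u)
  obtain ⟨b, hb⟩ := Nat.exists_eq_add_of_le (SubtreeCount.two_le_card_cisWith hR hRn v)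
  rw [ha, hb]
  -- the two sides differ by `(m + 1) * (a + 1) * (b + 1)`
  nlinarith [Nat.zero_le (m * a * b), Nat.zero_le (a * b), Nat.zero_le (m * a),
    Nat.zero_le (m * b)]
end
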